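/- Let n ≥ 2, −∞ < μ < 1/4 and 1 < p < p_KO, where p_KO := +∞ if 0 ≤ μ < 1/4 and p_KO := 1 − 2/α₋ if μ < 0. Then there exist constants 0 < c₁ < c₂ and a separable solution u(x) = |x|^{−2/(p−1)} v(x₁/|x|) of −Δu − (μ/x₁²)u + u^p = 0 in ℝⁿ₊, where v is a positive function on (0,1], twice continuously differentiable on (0,1), solving the angular equation (1−t²)v'' − (n−1)t v' + (μ/t²)v + Λ(−2/(p−1))v = v^p on (0,1), and satisfying c₁ t^{α₋} < v(t) < c₂ t^{α₋} for all t ∈ (0,1]. -/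

import Mathlib

open Real Set

noncomputable def lap {n : ℕ} (u : EuclideanSpace ℝ (Fin n) → ℝ)
    (x : EuclideanSpace ℝ (Fin n)) : ℝ :=
  ∑ i : Fin n, iteratedFDeriv ℝ 2 u x ![EuclideanSpace.single i 1, EuclideanSpace.single i 1]

noncomputable def x1 {n : ℕ} (x : EuclideanSpace ℝ (Fin n)) : ℝ :=
  if h : 0 < n then x ⟨0, h⟩ else 0

def halfSpace (n : ℕ) : Set (EuclideanSpace ℝ (Fin n)) := {x | 0 < x1 x}

noncomputable def aPlus (μ : ℝ) : ℝ := 1 / 2 + Real.sqrt (1 / 4 - μ)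

noncomputable def aMinus (μ : ℝ) : ℝ := 1 / 2 - Real.sqrt (1 / 4 - μ)

noncomputable def Lam (n : ℕ) (s : ℝ) : ℝ := s * (s + n - 2)

open MeasureTheory Filter Topology

lemma mono_bound {a b : ℝ} (hab : a ≤ b) {f g f' g' : ℝ → ℝ}
    (hf : ContinuousOn f (Icc a b)) (hg : ContinuousOn g (Icc a b))
    (hf' : ∀ x ∈ Ioo a b, HasDerivAt f (f' x) x) (hg' : ∀ x ∈ Ioo a b, HasDerivAt g (g' x) x)
    (h : ∀ x ∈ Ioo a b, |f' x| ≤ g' x) : |f b - f a| ≤ g b - g a := by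
  have h1 : MonotoneOn (fun x => g x - f x) (Icc a b) := by
    apply monotoneOn_of_deriv_nonneg (convex_Icc a b) (hg.sub hf)
    · rw [interior_Icc]
      intro x hx
      exact ((hg' x hx).sub (hf' x hx)).differentiableAt.differentiableWithinAt
    · rw [interior_Icc]
      intro x hx
      rw [((hg' x hx).sub (hf' x hx)).deriv]
      have := (abs_le.1 (h x hx)).2
      linarith
  have h2 : MonotoneOn (fun x => g x + f x) (Icc a b) := by
    apply monotoneOn_of_deriv_nonneg (convex_Icc a b) (hg.add hf)
    · rw [interior_Icc]
      intro x hx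
      exact ((hg' x hx).add (hf' x hx)).differentiableAt.differentiableWithinAt
    · rw [interior_Icc]
      intro x hx
      rw [((hg' x hx).add (hf' x hx)).deriv]
      have := (abs_le.1 (h x hx)).1
      linarith
  have e1 := h1 (left_mem_Icc.2 hab) (right_mem_Icc.2 hab) hab
  have e2 := h2 (left_mem_Icc.2 hab) (right_mem_Icc.2 hab) hab
  simp only at e1 e2
  rw [abs_le]; constructor <;> linarith

structure VD (k ρ L η ηd Φ : ℝ → ℝ) (F : ℝ → ℝ → ℝ) : Prop where
  k_cont : ContinuousOn k (Ioo 0 1)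
  k_pos : ∀ r ∈ Ioo (0:ℝ) 1, 0 < k r
  ρ_cont : ContinuousOn ρ (Ioo 0 1)
  ρ_pos : ∀ r ∈ Ioo (0:ℝ) 1, 0 < ρ r
  L_nonneg : ∀ r ∈ Ioo (0:ℝ) 1, 0 ≤ L r
  F_cont : ContinuousOn (Function.uncurry F) (Ico 0 1 ×ˢ univ)
  F_zero : ∀ r, F r 0 = 0
  F_lip : ∀ r ∈ Ioo (0:ℝ) 1, ∀ w w', |F r w - F r w'| ≤ L r * |w - w'|
  η_cont : ContinuousOn η (Ico 0 1)
  η_zero : η 0 = 0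
  η_der : ∀ r ∈ Ioo (0:ℝ) 1, HasDerivAt η (ηd r) r
  η_le : ∀ r ∈ Ioo (0:ℝ) 1, ρ r * L r ≤ ηd r
  Φ_cont : Continuous Φ
  Φ_zero : Φ 0 = 0
  Φ_der : ∀ r ∈ Ioo (0:ℝ) 1, HasDerivAt Φ (k r * η r) r

namespace VD
variable {k ρ L η ηd Φ : ℝ → ℝ} {F : ℝ → ℝ → ℝ}

lemma ηd_nonneg (h : VD k ρ L η ηd Φ F) : ∀ r ∈ Ioo (0:ℝ) 1, 0 ≤ ηd r := fun r hr =>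
  (mul_nonneg (h.ρ_pos r hr).le (h.L_nonneg r hr)).trans (h.η_le r hr)

lemma η_mono (h : VD k ρ L η ηd Φ F) : MonotoneOn η (Ico 0 1) := by
  apply monotoneOn_of_deriv_nonneg (convex_Ico 0 1) h.η_cont
  · rw [interior_Ico]
    intro x hx
    exact (h.η_der x hx).differentiableAt.differentiableWithinAt
  · rw [interior_Ico]
    intro x hx
    rw [(h.η_der x hx).deriv]
    exact h.ηd_nonneg x hx

lemma η_nonneg (h : VD k ρ L η ηd Φ F) : ∀ r ∈ Ico (0:ℝ) 1, 0 ≤ η r := fun r hr => by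
  rw [← h.η_zero]; exact h.η_mono ⟨le_rfl, one_pos⟩ hr hr.1

lemma Φ_mono (h : VD k ρ L η ηd Φ F) : MonotoneOn Φ (Icc 0 1) := by
  apply monotoneOn_of_deriv_nonneg (convex_Icc 0 1) h.Φ_cont.continuousOn
  · rw [interior_Icc]
    intro x hx
    exact (h.Φ_der x hx).differentiableAt.differentiableWithinAt
  · rw [interior_Icc]
    intro x hx
    rw [(h.Φ_der x hx).deriv]
    exact mul_nonneg (h.k_pos x hx).le (h.η_nonneg x ⟨hx.1.le, hx.2⟩)

lemma Φ_nonneg (h : VD k ρ L η ηd Φ F) : ∀ r ∈ Icc (0:ℝ) 1, 0 ≤ Φ r := fun r hr => by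
  rw [← h.Φ_zero]; exact h.Φ_mono ⟨le_rfl, zero_le_one⟩ hr hr.1

lemma keyP (h : VD k ρ L η ηd Φ F) {y0 D : ℝ} (hy0 : y0 ∈ Ico (0:ℝ) 1) (hD : 0 ≤ D)
    {P f : ℝ → ℝ} (hPc : ContinuousOn P (Ico y0 1)) (hP0 : P y0 = 0)
    (hP : ∀ r ∈ Ioo y0 1, HasDerivAt P (ρ r * f r) r)
    (hf : ∀ r ∈ Ioo y0 1, |f r| ≤ L r * (D * exp (2 * Φ r))) :
    ∀ z ∈ Ico y0 1, |P z| ≤ D * exp (2 * Φ z) * η z := by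
  intro z hz
  have h01 : ∀ r ∈ Ioo y0 z, r ∈ Ioo (0:ℝ) 1 := fun r hr =>
    ⟨hy0.1.trans_lt hr.1, hr.2.trans hz.2⟩
  have := mono_bound (f := P) (g := fun r => D * exp (2 * Φ z) * η r) (f' := fun r => ρ r * f r)
    (g' := fun r => D * exp (2 * Φ z) * ηd r) hz.1
    (hPc.mono fun r hr => ⟨hr.1, hr.2.trans_lt hz.2⟩)
    (continuousOn_const.mul (h.η_cont.mono fun r hr => ⟨hy0.1.trans hr.1, hr.2.trans_lt hz.2⟩))
    (fun r hr => hP r ⟨hr.1, hr.2.trans hz.2⟩)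
    (fun r hr => (h.η_der r (h01 r hr)).const_mul _)
    (by
      intro r hr
      have hr1 := h01 r hr
      rw [abs_mul, abs_of_pos (h.ρ_pos r hr1)]
      have hΦ : Φ r ≤ Φ z := h.Φ_mono ⟨hr1.1.le, hr1.2.le⟩ ⟨hy0.1.trans hz.1, hz.2.le⟩ hr.2.le
      have hE : D * exp (2 * Φ r) ≤ D * exp (2 * Φ z) := by gcongr
      calc ρ r * |f r| ≤ ρ r * (L r * (D * exp (2 * Φ r))) :=
            mul_le_mul_of_nonneg_left (hf r ⟨hr.1, hr1.2⟩) (h.ρ_pos r hr1).le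
        _ = (ρ r * L r) * (D * exp (2 * Φ r)) := by ring
        _ ≤ ηd r * (D * exp (2 * Φ z)) :=
            mul_le_mul (h.η_le r hr1) hE (by positivity) (h.ηd_nonneg r hr1)
        _ = _ := by ring)
  rw [hP0, sub_zero] at this
  refine this.trans ?_
  have := mul_nonneg (show 0 ≤ D * exp (2 * Φ z) by positivity) (h.η_nonneg y0 hy0)
  linarith

lemma keyPη (h : VD k ρ L η ηd Φ F) {r D : ℝ} (hr : r ∈ Ioo (0:ℝ) 1) {q : ℝ}
    (hq : |q| ≤ D * exp (2 * Φ r) * η r) :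
    |k r * q| ≤ D / 2 * (exp (2 * Φ r) * (2 * (k r * η r))) := by
  rw [abs_mul, abs_of_pos (h.k_pos r hr)]
  refine (mul_le_mul_of_nonneg_left hq (h.k_pos r hr).le).trans (le_of_eq ?_)
  ring

lemma expΦ_der (h : VD k ρ L η ηd Φ F) (D : ℝ) {r : ℝ} (hr : r ∈ Ioo (0:ℝ) 1) :
    HasDerivAt (fun r => D / 2 * exp (2 * Φ r))
      (D / 2 * (exp (2 * Φ r) * (2 * (k r * η r)))) r :=
  (((h.Φ_der r hr).const_mul 2).exp).const_mul _

lemma expΦ_cont (h : VD k ρ L η ηd Φ F) (D : ℝ) : Continuous (fun r => D / 2 * exp (2 * Φ r)) := by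
  have := h.Φ_cont
  fun_prop

lemma keyW (h : VD k ρ L η ηd Φ F) {y0 D : ℝ} (hy0 : y0 ∈ Ico (0:ℝ) 1) (hD : 0 ≤ D)
    {W P f : ℝ → ℝ} (hPc : ContinuousOn P (Ico y0 1)) (hP0 : P y0 = 0)
    (hP : ∀ r ∈ Ioo y0 1, HasDerivAt P (ρ r * f r) r)
    (hf : ∀ r ∈ Ioo y0 1, |f r| ≤ L r * (D * exp (2 * Φ r)))
    (hWc : ContinuousOn W (Icc y0 1)) (hW : ∀ r ∈ Ioo y0 1, HasDerivAt W (k r * P r) r) :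
    ∀ y ∈ Icc y0 1, |W y - W y0| ≤ D / 2 * exp (2 * Φ y) := by
  intro y hy
  have h01 : ∀ r ∈ Ioo y0 y, r ∈ Ioo (0:ℝ) 1 := fun r hr =>
    ⟨hy0.1.trans_lt hr.1, hr.2.trans_le hy.2⟩
  have := mono_bound (f := W) (g := fun r => D / 2 * exp (2 * Φ r)) (f' := fun r => k r * P r)
    (g' := fun r => D / 2 * (exp (2 * Φ r) * (2 * (k r * η r)))) hy.1
    (hWc.mono fun r hr => ⟨hr.1, hr.2.trans hy.2⟩)
    (h.expΦ_cont D).continuousOn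
    (fun r hr => hW r ⟨hr.1, hr.2.trans_le hy.2⟩)
    (fun r hr => h.expΦ_der D (h01 r hr))
    (fun r hr => h.keyPη (h01 r hr)
      (h.keyP hy0 hD hPc hP0 hP hf r ⟨hr.1.le, (h01 r hr).2⟩))
  refine this.trans ?_
  have : 0 ≤ D / 2 * exp (2 * Φ y0) := by positivity
  linarith

/-- integrals for a given right hand side -/
lemma integ (h : VD k ρ L η ηd Φ F) {D : ℝ} (hD : 0 ≤ D)
    {f : ℝ → ℝ} (hfc : ContinuousOn f (Ico 0 1))
    (hf : ∀ r ∈ Ioo (0:ℝ) 1, |f r| ≤ L r * (D * exp (2 * Φ r))) (a : ℝ) :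
    ContinuousOn (fun z => ∫ r in (0:ℝ)..z, ρ r * f r) (Ico 0 1) ∧
    (∀ r ∈ Ioo (0:ℝ) 1, HasDerivAt (fun z => ∫ r in (0:ℝ)..z, ρ r * f r) (ρ r * f r) r) ∧
    ContinuousOn (fun y => a + ∫ z in (0:ℝ)..y, k z * ∫ r in (0:ℝ)..z, ρ r * f r) (Icc 0 1) ∧
    (∀ z ∈ Ioo (0:ℝ) 1, HasDerivAt (fun y => a + ∫ z in (0:ℝ)..y, k z * ∫ r in (0:ℝ)..z, ρ r * f r)
      (k z * ∫ r in (0:ℝ)..z, ρ r * f r) z) := by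
  have hρf : ContinuousOn (fun r => ρ r * f r) (Ioo 0 1) :=
    h.ρ_cont.mul (hfc.mono Ioo_subset_Ico_self)
  have hI1 : ∀ z ∈ Ico (0:ℝ) 1, IntervalIntegrable (fun r => ρ r * f r) volume 0 z := by
    intro z hz
    have hηi : IntervalIntegrable ηd volume 0 z := by
      apply intervalIntegral.intervalIntegrable_deriv_of_nonneg (g := η)
      · rw [uIcc_of_le hz.1]
        exact h.η_cont.mono fun r hr => ⟨hr.1, hr.2.trans_lt hz.2⟩
      · rw [min_eq_left hz.1, max_eq_right hz.1]
        exact fun r hr => h.η_der r ⟨hr.1, hr.2.trans hz.2⟩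
      · rw [min_eq_left hz.1, max_eq_right hz.1]
        exact fun r hr => h.ηd_nonneg r ⟨hr.1, hr.2.trans hz.2⟩
    refine (hηi.mul_const (D * exp (2 * Φ z))).mono_fun' ?_ ?_
    · rw [uIoc_of_le hz.1]
      exact (hρf.mono fun r hr => ⟨hr.1, hr.2.trans_lt hz.2⟩).aestronglyMeasurable measurableSet_Ioc
    · rw [uIoc_of_le hz.1]
      filter_upwards [ae_restrict_mem measurableSet_Ioc] with r hr
      have hr1 : r ∈ Ioo (0:ℝ) 1 := ⟨hr.1, hr.2.trans_lt hz.2⟩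
      rw [Real.norm_eq_abs, abs_mul, abs_of_pos (h.ρ_pos r hr1)]
      have hΦ : Φ r ≤ Φ z := h.Φ_mono ⟨hr1.1.le, hr1.2.le⟩ ⟨hz.1, hz.2.le⟩ hr.2
      have hE : D * exp (2 * Φ r) ≤ D * exp (2 * Φ z) := by gcongr
      calc ρ r * |f r| ≤ ρ r * (L r * (D * exp (2 * Φ r))) :=
            mul_le_mul_of_nonneg_left (hf r hr1) (h.ρ_pos r hr1).le
        _ = (ρ r * L r) * (D * exp (2 * Φ r)) := by ring
        _ ≤ ηd r * (D * exp (2 * Φ z)) :=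
            mul_le_mul (h.η_le r hr1) hE (by positivity) (h.ηd_nonneg r hr1)
  have hPd : ∀ r ∈ Ioo (0:ℝ) 1, HasDerivAt (fun z => ∫ r in (0:ℝ)..z, ρ r * f r) (ρ r * f r) r := by
    intro r hr
    refine intervalIntegral.integral_hasDerivAt_right (hI1 r ⟨hr.1.le, hr.2⟩) ?_
      (hρf.continuousAt (isOpen_Ioo.mem_nhds hr))
    exact hρf.stronglyMeasurableAtFilter isOpen_Ioo r hr
  have hPc : ContinuousOn (fun z => ∫ r in (0:ℝ)..z, ρ r * f r) (Ico 0 1) := by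
    intro z hz
    obtain ⟨z', hz', hz'1⟩ := exists_between hz.2
    have hz0 : 0 ≤ z' := hz.1.trans hz'.le
    have := intervalIntegral.continuousOn_primitive_interval' (hI1 z' ⟨hz0, hz'1⟩)
      (left_mem_uIcc)
    rw [uIcc_of_le hz0] at this
    refine (this z ⟨hz.1, hz'.le⟩).mono_of_mem_nhdsWithin ?_
    have : Iio z' ∈ 𝓝 z := Iio_mem_nhds hz'
    filter_upwards [self_mem_nhdsWithin, mem_nhdsWithin_of_mem_nhds this] with r hr hr'
    exact ⟨hr.1, le_of_lt hr'⟩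
  have hPb := h.keyP (y0 := 0) ⟨le_rfl, one_pos⟩ hD hPc (by simp) hPd hf
  have hkP : ContinuousOn (fun z => k z * ∫ r in (0:ℝ)..z, ρ r * f r) (Ioo 0 1) :=
    h.k_cont.mul (hPc.mono Ioo_subset_Ico_self)
  have hI2 : IntervalIntegrable (fun z => k z * ∫ r in (0:ℝ)..z, ρ r * f r) volume 0 1 := by
    have hEi : IntervalIntegrable (fun r => D / 2 * (exp (2 * Φ r) * (2 * (k r * η r)))) volume 0 1 := by
      apply intervalIntegral.intervalIntegrable_deriv_of_nonneg
        (g := fun r => D / 2 * exp (2 * Φ r)) (h.expΦ_cont D).continuousOn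
      · rw [min_eq_left zero_le_one, max_eq_right zero_le_one]
        exact fun r hr => h.expΦ_der D hr
      · rw [min_eq_left zero_le_one, max_eq_right zero_le_one]
        intro r hr
        have := (h.k_pos r hr)
        have := h.η_nonneg r ⟨hr.1.le, hr.2⟩
        positivity
    refine hEi.mono_fun' ?_ ?_
    · rw [uIoc_of_le zero_le_one, ← restrict_Ioo_eq_restrict_Ioc]
      exact hkP.aestronglyMeasurable measurableSet_Ioo
    · rw [uIoc_of_le zero_le_one, ← restrict_Ioo_eq_restrict_Ioc]
      filter_upwards [ae_restrict_mem measurableSet_Ioo] with r hr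
      exact h.keyPη hr (hPb r ⟨hr.1.le, hr.2⟩)
  refine ⟨hPc, hPd, ?_, ?_⟩
  · have := intervalIntegral.continuousOn_primitive_interval' hI2 (left_mem_uIcc)
    rw [uIcc_of_le zero_le_one] at this
    exact continuousOn_const.add this
  · intro z hz
    refine HasDerivAt.const_add _ (intervalIntegral.integral_hasDerivAt_right ?_ ?_
      (hkP.continuousAt (isOpen_Ioo.mem_nhds hz)))
    · refine hI2.mono_set ?_
      rw [uIcc_of_le zero_le_one, uIcc_of_le hz.1.le]
      exact Icc_subset_Icc_right hz.2.le
    · exact hkP.stronglyMeasurableAtFilter isOpen_Ioo z hz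

/-- uniqueness -/
lemma uniq (h : VD k ρ L η ηd Φ F) {y0 : ℝ} (hy0 : y0 ∈ Ico (0:ℝ) 1)
    {W P : ℝ → ℝ} (hPc : ContinuousOn P (Ico y0 1)) (hP0 : P y0 = 0)
    (hP : ∀ r ∈ Ioo y0 1, HasDerivAt P (ρ r * F r (W r)) r)
    (hWc : ContinuousOn W (Icc y0 1)) (hW0 : W y0 = 0)
    (hW : ∀ r ∈ Ioo y0 1, HasDerivAt W (k r * P r) r) :
    ∀ y ∈ Icc y0 1, W y = 0 := by
  have hΦc := h.Φ_cont
  obtain ⟨m, hm, hmax⟩ := isCompact_Icc.exists_isMaxOn (nonempty_Icc.2 hy0.2.le)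
    (f := fun y => |W y| * exp (-(2 * Φ y))) (hWc.abs.mul (by fun_prop))
  set D := |W m| * exp (-(2 * Φ m)) with hDdef
  have hD : 0 ≤ D := by positivity
  have hb : ∀ r ∈ Icc y0 1, |W r| ≤ D * exp (2 * Φ r) := by
    intro r hr
    have : |W r| * exp (-(2 * Φ r)) ≤ D := hmax hr
    calc |W r| = |W r| * exp (-(2 * Φ r)) * exp (2 * Φ r) := by
          rw [mul_assoc, ← exp_add]; simp
      _ ≤ _ := by gcongr
  have := h.keyW hy0 hD hPc hP0 hP (f := fun r => F r (W r)) (by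
    intro r hr
    have hr1 : r ∈ Ioo (0:ℝ) 1 := ⟨hy0.1.trans_lt hr.1, hr.2⟩
    have := h.F_lip r hr1 (W r) 0
    rw [h.F_zero, sub_zero, sub_zero] at this
    exact this.trans (mul_le_mul_of_nonneg_left (hb r ⟨hr.1.le, hr.2.le⟩) (h.L_nonneg r hr1)))
    hWc hW m hm
  rw [hW0, sub_zero] at this
  have h2 : D ≤ D / 2 := by
    calc D = |W m| * exp (-(2 * Φ m)) := rfl
      _ ≤ D / 2 * exp (2 * Φ m) * exp (-(2 * Φ m)) := by gcongr
      _ = D / 2 := by rw [mul_assoc, ← exp_add]; simp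
  have hD0 : D = 0 := by linarith
  intro y hy
  have := hb y hy
  rw [hD0, zero_mul] at this
  exact abs_eq_zero.1 (le_antisymm this (abs_nonneg _))

lemma exists_sol (h : VD k ρ L η ηd Φ F) :
    ∃ W P : ℝ → ℝ → ℝ, ∃ C : ℝ, 0 ≤ C ∧ (∀ a, Continuous (W a)) ∧ (∀ a, W a 0 = a) ∧
      (∀ a, P a 0 = 0) ∧ (∀ a, ContinuousOn (P a) (Ico 0 1)) ∧
      (∀ a, ∀ r ∈ Ioo (0:ℝ) 1, HasDerivAt (W a) (k r * P a r) r) ∧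
      (∀ a, ∀ r ∈ Ioo (0:ℝ) 1, HasDerivAt (P a) (ρ r * F r (W a r)) r) ∧
      (∀ a a', ∀ y ∈ Icc (0:ℝ) 1, |W a y - W a' y| ≤ C * |a - a'|) := by
  have hΦc := h.Φ_cont
  let w : C(Icc (0:ℝ) 1, ℝ) → ℝ → ℝ := fun Z y =>
    exp (2 * Φ y) * IccExtend (zero_le_one' ℝ) Z y
  have hwc : ∀ Z, Continuous (w Z) := fun Z => by
    have : Continuous (IccExtend (zero_le_one' ℝ) Z) := Z.continuous.Icc_extend'
    fun_prop
  have hfc : ∀ Z, ContinuousOn (fun r => F r (w Z r)) (Ico 0 1) := fun Z =>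
    h.F_cont.comp (f := fun r => (r, w Z r)) (continuous_id.prodMk (hwc Z)).continuousOn
      (fun r hr => ⟨hr, mem_univ _⟩)
  have hwd : ∀ Z Z' r, |w Z r - w Z' r| ≤ dist Z Z' * exp (2 * Φ r) := by
    intro Z Z' r
    simp only [w, ← mul_sub, abs_mul, abs_exp, IccExtend, Function.comp]
    rw [mul_comm]
    gcongr
    rw [← Real.dist_eq]
    exact ContinuousMap.dist_apply_le_dist (f := Z) (g := Z') _
  have hFd : ∀ Z Z', ∀ r ∈ Ioo (0:ℝ) 1,
      |F r (w Z r) - F r (w Z' r)| ≤ L r * (dist Z Z' * exp (2 * Φ r)) := fun Z Z' r hr =>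
    (h.F_lip r hr _ _).trans (mul_le_mul_of_nonneg_left (hwd Z Z' r) (h.L_nonneg r hr))
  have hw0 : ∀ r, w 0 r = 0 := fun r => by simp [w, IccExtend]
  have hF0 : ∀ Z, ∀ r ∈ Ioo (0:ℝ) 1, |F r (w Z r)| ≤ L r * (dist Z 0 * exp (2 * Φ r)) := by
    intro Z r hr
    have := hFd Z 0 r hr
    rwa [hw0, h.F_zero, sub_zero] at this
  have hI := fun Z a => h.integ dist_nonneg (hfc Z) (hF0 Z) a
  let S : ℝ → C(Icc (0:ℝ) 1, ℝ) → C(Icc (0:ℝ) 1, ℝ) := fun a Z =>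
    { toFun := fun y => exp (-(2 * Φ y)) *
        (a + ∫ z in (0:ℝ)..y, k z * ∫ r in (0:ℝ)..z, ρ r * F r (w Z r))
      continuous_toFun := by
        have := (hI Z a).2.2.1.domRestrict
        simp only [domRestrict_def] at this
        fun_prop }
  have hS : ∀ a, ContractingWith (1/2) (S a) := by
    intro a
    refine ⟨by norm_num, LipschitzWith.of_dist_le_mul fun Z Z' => ?_⟩
    rw [ContinuousMap.dist_le (by positivity)]
    intro y
    have hk := h.keyW (y0 := 0) (D := dist Z Z') ⟨le_rfl, one_pos⟩ dist_nonneg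
      (f := fun r => F r (w Z r) - F r (w Z' r))
      ((hI Z a).1.sub (hI Z' a).1) (by simp)
      (fun r hr => (((hI Z a).2.1 r hr).sub ((hI Z' a).2.1 r hr)).congr_deriv (by ring))
      (hFd Z Z') ((hI Z a).2.2.1.sub (hI Z' a).2.2.1)
      (fun r hr => (((hI Z a).2.2.2 r hr).sub ((hI Z' a).2.2.2 r hr)).congr_deriv
        (by simp only [Pi.sub_apply]; ring)) y y.2
    simp only [Pi.sub_apply, intervalIntegral.integral_same, sub_self, sub_zero] at hk
    simp only [S, ContinuousMap.coe_mk, Real.dist_eq, ← mul_sub, abs_mul, abs_exp]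
    calc _ ≤ exp (-(2 * Φ y)) * (dist Z Z' / 2 * exp (2 * Φ y)) := by gcongr
      _ = dist Z Z' / 2 * (exp (-(2 * Φ y)) * exp (2 * Φ y)) := by ring
      _ = dist Z Z' / 2 := by rw [← exp_add]; simp
      _ ≤ _ := by norm_num; linarith
  let Z : ℝ → C(Icc (0:ℝ) 1, ℝ) := fun a => ContractingWith.fixedPoint (S a) (hS a)
  have hZ : ∀ a, S a (Z a) = Z a := fun a => (hS a).fixedPoint_isFixedPt
  have hWeq : ∀ a, ∀ y ∈ Icc (0:ℝ) 1, w (Z a) y =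
      a + ∫ z in (0:ℝ)..y, k z * ∫ r in (0:ℝ)..z, ρ r * F r (w (Z a) r) := by
    intro a y hy
    have h1 : Z a ⟨y, hy⟩ = exp (-(2 * Φ y)) *
        (a + ∫ z in (0:ℝ)..y, k z * ∫ r in (0:ℝ)..z, ρ r * F r (w (Z a) r)) := by
      conv_lhs => rw [← hZ a]
      rfl
    conv_lhs => simp only [w]
    rw [IccExtend_of_mem _ _ hy, h1, ← mul_assoc, ← exp_add]
    simp
  refine ⟨fun a => w (Z a), fun a z => ∫ r in (0:ℝ)..z, ρ r * F r (w (Z a) r),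
    exp (2 * Φ 1) * 2, by positivity, fun a => hwc _, ?_, ?_, ?_, ?_, ?_, ?_⟩
  · intro a
    simp only
    rw [hWeq a 0 ⟨le_rfl, zero_le_one⟩]; simp
  · intro a; simp
  · exact fun a => (hI (Z a) a).1
  · intro a r hr
    refine ((hI (Z a) a).2.2.2 r hr).congr_of_eventuallyEq ?_
    filter_upwards [isOpen_Ioo.mem_nhds hr] with y hy
    exact hWeq a y ⟨hy.1.le, hy.2.le⟩
  · exact fun a => (hI (Z a) a).2.1
  · intro a a' y hy
    refine (hwd _ _ y).trans ?_
    have h1 : dist (Z a) (Z a') ≤ |a - a'| / (1 - ((1/2 : NNReal) : ℝ)) := by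
      refine ContractingWith.fixedPoint_lipschitz_in_map (hS a) (hS a') fun z => ?_
      rw [ContinuousMap.dist_le (by positivity)]
      intro y
      simp only [S, ContinuousMap.coe_mk, Real.dist_eq, ← mul_sub, abs_mul, abs_exp,
        add_sub_add_right_eq_sub]
      have : exp (-(2 * Φ y)) ≤ 1 := by
        rw [exp_le_one_iff]
        have := h.Φ_nonneg y y.2
        linarith
      exact mul_le_of_le_one_left (abs_nonneg _) this
    have h2 : dist (Z a) (Z a') ≤ 2 * |a - a'| := by
      refine h1.trans (le_of_eq ?_)
      norm_num
      ring
    have h3 : Φ y ≤ Φ 1 := h.Φ_mono hy ⟨zero_le_one, le_rfl⟩ hy.2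
    calc _ ≤ (2 * |a - a'|) * exp (2 * Φ 1) := by gcongr
      _ = _ := by ring

end VD

namespace VD
variable {k ρ L η ηd Φ : ℝ → ℝ} {F : ℝ → ℝ → ℝ}

lemma push (h : VD k ρ L η ηd Φ F) {W P g Q S : ℝ → ℝ} (hWc : Continuous W)
    (hPc : ContinuousOn P (Ico 0 1))
    (hW : ∀ r ∈ Ioo (0:ℝ) 1, HasDerivAt W (k r * P r) r)
    (hP : ∀ r ∈ Ioo (0:ℝ) 1, HasDerivAt P (ρ r * F r (W r)) r)
    (hgc : Continuous g) (hQc : ContinuousOn Q (Ico 0 1))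
    (hg : ∀ r ∈ Ioo (0:ℝ) 1, HasDerivAt g (k r * Q r) r)
    (hQ : ∀ r ∈ Ioo (0:ℝ) 1, HasDerivAt Q (ρ r * S r) r)
    (hSc : ContinuousOn S (Ico 0 1)) (hS : ∀ r ∈ Ico (0:ℝ) 1, S r < F r (g r))
    {y : ℝ} (hy : y ∈ Ico (0:ℝ) 1) (hWg : W y = g y) (hPQ : Q y ≤ P y) :
    ∃ z ∈ Ioo y 1, ∀ x ∈ Ioc y z, g x < W x := by
  have hFc : ContinuousOn (fun r => F r (W r) - S r) (Ico 0 1) :=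
    (h.F_cont.comp (f := fun r => (r, W r)) (continuous_id.prodMk hWc).continuousOn
      (fun r hr => ⟨hr, mem_univ _⟩)).sub hSc
  have hpos : 0 < F y (W y) - S y := by rw [hWg]; linarith [hS y hy]
  have hev : ∀ᶠ r in 𝓝[>] y, 0 < F r (W r) - S r := by
    have h1 : ∀ᶠ r in 𝓝[Ico 0 1] y, 0 < F r (W r) - S r := (hFc y hy).eventually (lt_mem_nhds hpos)
    have h2 : 𝓝[>] y ≤ 𝓝[Ico 0 1] y := by
      rw [← nhdsWithin_Ioo_eq_nhdsGT hy.2]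
      exact nhdsWithin_mono _ fun r hr => ⟨hy.1.trans hr.1.le, hr.2⟩
    exact h2 h1
  obtain ⟨z0, hz0, hz0'⟩ := (mem_nhdsGT_iff_exists_Ioo_subset).1 hev
  obtain ⟨z, hz1, hz2⟩ := exists_between (lt_min (show y < z0 from hz0) hy.2)
  have hz3 := lt_min_iff.1 hz2
  have h01 : ∀ r ∈ Ioo y z, r ∈ Ioo (0:ℝ) 1 := fun r hr =>
    ⟨hy.1.trans_lt hr.1, hr.2.trans hz3.2⟩
  have m1 : StrictMonoOn (P - Q) (Icc y z) := by
    apply strictMonoOn_of_deriv_pos (convex_Icc y z)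
    · exact (hPc.sub hQc).mono fun r hr => ⟨hy.1.trans hr.1, hr.2.trans_lt hz3.2⟩
    · rw [interior_Icc]
      intro r hr
      rw [((hP r (h01 r hr)).sub (hQ r (h01 r hr))).deriv, ← mul_sub]
      exact mul_pos (h.ρ_pos r (h01 r hr)) (hz0' ⟨hr.1, hr.2.trans hz3.1⟩)
  have m2 : StrictMonoOn (W - g) (Icc y z) := by
    apply strictMonoOn_of_deriv_pos (convex_Icc y z)
    · exact (hWc.sub hgc).continuousOn
    · rw [interior_Icc]
      intro r hr
      rw [((hW r (h01 r hr)).sub (hg r (h01 r hr))).deriv, ← mul_sub]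
      have := m1 (left_mem_Icc.2 hz1.le) ⟨hr.1.le, hr.2.le⟩ hr.1
      simp only [Pi.sub_apply] at this
      exact mul_pos (h.k_pos r (h01 r hr)) (by linarith)
  refine ⟨z, ⟨hz1, hz3.2⟩, fun x hx => ?_⟩
  have := m2 (left_mem_Icc.2 hz1.le) ⟨hx.1.le, hx.2⟩ hx.1
  simp only [Pi.sub_apply] at this
  linarith

lemma shoot (h : VD k ρ L η ηd Φ F) {g Q S : ℝ → ℝ}
    (hgc : Continuous g) (hg0 : ∀ r ∈ Icc (0:ℝ) 1, 0 < g r)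
    (hQc : ContinuousOn Q (Ico 0 1)) (hQ0 : Q 0 ≤ 0)
    (hg : ∀ r ∈ Ioo (0:ℝ) 1, HasDerivAt g (k r * Q r) r)
    (hQ : ∀ r ∈ Ioo (0:ℝ) 1, HasDerivAt Q (ρ r * S r) r)
    (hSc : ContinuousOn S (Ico 0 1)) (hS : ∀ r ∈ Ico (0:ℝ) 1, S r < F r (g r)) :
    ∃ W P : ℝ → ℝ, Continuous W ∧ ContinuousOn P (Ico 0 1) ∧ P 0 = 0 ∧
      (∀ r ∈ Ioo (0:ℝ) 1, HasDerivAt W (k r * P r) r) ∧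
      (∀ r ∈ Ioo (0:ℝ) 1, HasDerivAt P (ρ r * F r (W r)) r) ∧
      (∀ r ∈ Icc (0:ℝ) 1, 0 < W r ∧ W r ≤ g r) := by
  obtain ⟨W, P, C, hC, hWc, hW0, hP0, hPc, hW, hP, hLip⟩ := h.exists_sol
  let U : Set ℝ := {a | 0 ≤ a ∧ ∃ y ∈ Icc (0:ℝ) 1, g y < W a y ∧ ∀ x ∈ Icc 0 y, 0 < W a x}
  have hUbdd : BddBelow U := ⟨0, fun a ha => ha.1⟩
  have hUne : U.Nonempty := by
    refine ⟨g 0, (hg0 0 ⟨le_rfl, zero_le_one⟩).le, ?_⟩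
    obtain ⟨z, hz, hz'⟩ := h.push (hWc (g 0)) (hPc _) (hW _) (hP _) hgc hQc hg hQ hSc hS
      (y := 0) ⟨le_rfl, one_pos⟩ (hW0 _) (by rw [hP0]; exact hQ0)
    refine ⟨z, ⟨hz.1.le, hz.2.le⟩, hz' z ⟨hz.1, le_rfl⟩, fun x hx => ?_⟩
    rcases hx.1.eq_or_lt with h0 | h0
    · rw [← h0, hW0]; exact hg0 0 ⟨le_rfl, zero_le_one⟩
    · exact (hg0 x ⟨hx.1, hx.2.trans hz.2.le⟩).trans (hz' x ⟨h0, hx.2⟩)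
  obtain ⟨u, -, hu, huU⟩ := exists_seq_tendsto_sInf hUne hUbdd
  set a := sInf U with ha
  have ha0 : 0 ≤ a := le_csInf hUne fun b hb => hb.1
  choose hu0 Y hY hYg hYpos using huU
  obtain ⟨y, hy, φ, hφ, hφy⟩ := isCompact_Icc.tendsto_subseq hY
  have huφ : Tendsto (fun i => u (φ i)) atTop (𝓝 a) := hu.comp hφ.tendsto_atTop
  have hdiff : Tendsto (fun i => C * |u (φ i) - a|) atTop (𝓝 0) := by
    have : Tendsto (fun i => C * |u (φ i) - a|) atTop (𝓝 (C * |a - a|)) :=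
      ((huφ.sub_const a).abs).const_mul C
    simpa using this
  have hWy : g y ≤ W a y := by
    have h1 : Tendsto (fun i => g (Y (φ i)) - C * |u (φ i) - a|) atTop (𝓝 (g y - 0)) :=
      ((hgc.tendsto y).comp hφy).sub hdiff
    have h2 : Tendsto (fun i => W a (Y (φ i))) atTop (𝓝 (W a y)) := ((hWc a).tendsto y).comp hφy
    rw [sub_zero] at h1
    refine le_of_tendsto_of_tendsto' h1 h2 fun i => ?_
    have e1 := hYg (φ i)
    have e2 := (abs_le.1 (hLip (u (φ i)) a _ (hY (φ i)))).2
    linarith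
  have hWypos : 0 < W a y := (hg0 y hy).trans_le hWy
  have hnn : ∀ x ∈ Icc 0 y, 0 ≤ W a x := by
    intro x hx
    rcases hx.2.eq_or_lt with h0 | h0
    · rw [h0]; exact hWypos.le
    · have hx1 : x ∈ Icc (0:ℝ) 1 := ⟨hx.1, hx.2.trans hy.2⟩
      have h1 : Tendsto (fun i => - (C * |u (φ i) - a|)) atTop (𝓝 (-0)) := hdiff.neg
      rw [neg_zero] at h1
      refine le_of_tendsto h1 ?_
      filter_upwards [hφy.eventually (lt_mem_nhds h0)] with i hi
      have e1 := hYpos (φ i) x ⟨hx.1, le_of_lt hi⟩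
      have e2 := (abs_le.1 (hLip (u (φ i)) a _ hx1)).2
      linarith
  have hpos : ∀ x ∈ Icc 0 y, 0 < W a x := by
    intro x hx
    refine lt_of_le_of_ne (hnn x hx) fun h0 => ?_
    have hxy : x < y := lt_of_le_of_ne hx.2 fun e => by rw [e] at h0; exact hWypos.ne h0
    have hx1 : x ∈ Ico (0:ℝ) 1 := ⟨hx.1, hxy.trans_le hy.2⟩
    have hPx : P a x = 0 := by
      rcases hx.1.eq_or_lt with e | e
      · rw [← e]; exact hP0 a
      · have hloc : IsLocalMin (W a) x := by
          filter_upwards [Ioo_mem_nhds e hxy] with r hr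
          rw [← h0]; exact hnn r ⟨hr.1.le, hr.2.le⟩
        have := hloc.hasDerivAt_eq_zero (hW a x ⟨e, hx1.2⟩)
        rcases mul_eq_zero.1 this with h' | h'
        · exact absurd h' (h.k_pos x ⟨e, hx1.2⟩).ne'
        · exact h'
    have := h.uniq hx1 ((hPc a).mono (Ico_subset_Ico_left hx1.1)) hPx
      (fun r hr => hP a r ⟨hx1.1.trans_lt hr.1, hr.2⟩) (hWc a).continuousOn h0.symm
      (fun r hr => hW a r ⟨hx1.1.trans_lt hr.1, hr.2⟩) y ⟨hxy.le, hy.2⟩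
    exact hWypos.ne' this
  have hapos : 0 < a := by
    have := hpos 0 ⟨le_rfl, hy.1⟩
    rwa [hW0] at this
  have hnot : ∀ z ∈ Icc (0:ℝ) 1, (∀ x ∈ Icc 0 z, 0 < W a x) → W a z ≤ g z := by
    intro z hz hzp
    by_contra hlt
    push Not at hlt
    obtain ⟨m, hm, hmin⟩ := isCompact_Icc.exists_isMinOn (nonempty_Icc.2 hz.1)
      (hWc a).continuousOn
    have hmp := hzp m hm
    have hd : 0 < min (W a m) (W a z - g z) := lt_min hmp (by linarith)
    set d := min (W a m) (W a z - g z)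
    set ε := min a (d / (2 * (C + 1))) with hε
    have hεp : 0 < ε := lt_min hapos (by positivity)
    have hε1 : ε ≤ a := min_le_left _ _
    have hε2 : C * ε < d := by
      have : ε ≤ d / (2 * (C + 1)) := min_le_right _ _
      rw [le_div_iff₀ (by positivity)] at this
      nlinarith
    have hab : |a - (a - ε)| = ε := by rw [sub_sub_cancel, abs_of_pos hεp]
    have : a - ε ∈ U := by
      refine ⟨by linarith, z, hz, ?_, ?_⟩
      · have := (abs_le.1 (hLip a (a - ε) z hz)).2
        rw [hab] at this
        have : d ≤ W a z - g z := min_le_right _ _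
        linarith
      · intro x hx
        have h1 := (abs_le.1 (hLip a (a - ε) x ⟨hx.1, hx.2.trans hz.2⟩)).2
        rw [hab] at h1
        have h2 : d ≤ W a m := min_le_left _ _
        have h3 : W a m ≤ W a x := hmin hx
        linarith
    have := csInf_le hUbdd this
    linarith
  have hle : ∀ z ∈ Icc 0 y, W a z ≤ g z := fun z hz =>
    hnot z ⟨hz.1, hz.2.trans hy.2⟩ fun x hx => hpos x ⟨hx.1, hx.2.trans hz.2⟩
  have hyeq : W a y = g y := le_antisymm (hle y ⟨hy.1, le_rfl⟩) hWy
  have hy1 : y = 1 := by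
    by_contra hne
    have hylt : y < 1 := lt_of_le_of_ne hy.2 hne
    have hPQ : Q y ≤ P a y := by
      rcases hy.1.eq_or_lt with e | e
      · rw [← e, hP0]; exact hQ0
      · have hyI : y ∈ Ioo (0:ℝ) 1 := ⟨e, hylt⟩
        have hd := (hW a y hyI).sub (hg y hyI)
        rw [hasDerivAt_iff_tendsto_slope] at hd
        have hd' : Tendsto (slope (W a - g) y) (𝓝[<] y) (𝓝 (k y * P a y - k y * Q y)) :=
          hd.mono_left (nhdsWithin_mono _ fun r hr => ne_of_lt hr)
        have : 0 ≤ k y * P a y - k y * Q y := by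
          refine ge_of_tendsto hd' ?_
          filter_upwards [Ioo_mem_nhdsLT e] with r hr
          rw [slope_def_field]
          simp only [Pi.sub_apply, hyeq, sub_self, sub_zero]
          apply div_nonneg_of_nonpos
          · linarith [hle r ⟨hr.1.le, hr.2.le⟩]
          · linarith [hr.2]
        rw [← mul_sub] at this
        have := nonneg_of_mul_nonneg_right this (h.k_pos y hyI)
        linarith
    obtain ⟨z, hz, hz'⟩ := h.push (hWc a) (hPc _) (hW _) (hP _) hgc hQc hg hQ hSc hS
      (y := y) ⟨hy.1, hylt⟩ hyeq hPQ
    have := hnot z ⟨hy.1.trans hz.1.le, hz.2.le⟩ (fun x hx => by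
      rcases le_or_gt x y with h0 | h0
      · exact hpos x ⟨hx.1, h0⟩
      · exact (hg0 x ⟨hx.1, hx.2.trans hz.2.le⟩).trans (hz' x ⟨h0, hx.2⟩))
    linarith [hz' z ⟨hz.1, le_rfl⟩]
  subst hy1
  exact ⟨W a, P a, hWc a, hPc a, hP0 a, hW a, hP a, fun r hr => ⟨hpos r hr, hle r hr⟩⟩

end VD

noncomputable def kf (b α : ℝ) (r : ℝ) : ℝ := r ^ (-b) * (1 - r) ^ (-1/2 - α) / 4
noncomputable def rf (b α : ℝ) (r : ℝ) : ℝ := r ^ (b - 1) * (1 - r) ^ (α - 1/2)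
noncomputable def Nf (R p : ℝ) (w : ℝ) : ℝ := (max 0 (min w R)) ^ p
noncomputable def Ff (R p β κ : ℝ) (r w : ℝ) : ℝ := (1 - r) ^ (β / 2) * Nf R p w - κ * w

lemma Nf_lip {R p : ℝ} (hR : 0 < R) (hp : 1 < p) (w w' : ℝ) :
    |Nf R p w - Nf R p w'| ≤ p * R ^ (p - 1) * |w - w'| := by
  have h1 : ∀ x ∈ Icc 0 R, ∀ y ∈ Icc 0 R, |y ^ p - x ^ p| ≤ p * R ^ (p - 1) * |y - x| := by
    intro x hx y hy
    have := (convex_Icc 0 R).norm_image_sub_le_of_norm_hasDerivWithin_le (𝕜 := ℝ)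
      (f := fun x : ℝ => x ^ p) (f' := fun x => p * x ^ (p - 1)) (C := p * R ^ (p - 1))
      (fun x hx => (Real.hasDerivAt_rpow_const (Or.inr hp.le)).hasDerivWithinAt)
      (fun x hx => by
        rw [Real.norm_eq_abs, abs_of_nonneg (mul_nonneg (by linarith) (rpow_nonneg hx.1 _))]
        exact mul_le_mul_of_nonneg_left (rpow_le_rpow hx.1 hx.2 (by linarith)) (by linarith)) hx hy
    simpa [Real.norm_eq_abs] using this
  have hm : ∀ w, max 0 (min w R) ∈ Icc 0 R := fun w =>
    ⟨le_max_left _ _, max_le hR.le (min_le_right _ _)⟩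
  refine (h1 _ (hm w') _ (hm w)).trans ?_
  have h2 : |max 0 (min w R) - max 0 (min w' R)| ≤ |w - w'| := by
    refine (abs_max_sub_max_le_max 0 (min w R) 0 (min w' R)).trans ?_
    refine max_le (by simp) ?_
    refine (abs_min_sub_min_le_max w R w' R).trans ?_
    simp
  have : 0 ≤ p * R ^ (p - 1) := mul_nonneg (by linarith) (rpow_nonneg hR.le _)
  exact mul_le_mul_of_nonneg_left h2 this

lemma exists_VD {b α β κ p R : ℝ} (hb : 0 < b) (hα : α < 1/2) (hβ : -2 < β) (hp : 1 < p)
    (hR : 0 < R) : ∃ L η ηd Φ, VD (kf b α) (rf b α) L η ηd Φ (Ff R p β κ) := by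
  obtain ⟨δ, hδ0, hδ1⟩ := exists_between (show (0:ℝ) < min (min 1 (1 + β/2)) (1/2 - α) from
    lt_min (lt_min one_pos (by linarith)) (by linarith))
  rw [lt_min_iff, lt_min_iff] at hδ1
  obtain ⟨⟨hδ1, hδ2⟩, hδ3⟩ := hδ1
  set K := p * R ^ (p - 1) with hK
  have hKp : 0 < K := mul_pos (by linarith) (rpow_pos_of_pos hR _)
  set ε := α - 1/2 + δ with hε
  have hεn : ε < 0 := by linarith
  set m := min b (-ε) with hm
  have hmp : 0 < m := lt_min hb (by linarith)
  set A := (K + |κ|) / m with hA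
  have hAp : 0 < A := by positivity
  have hc1 : ∀ c : ℝ, ContinuousOn (fun r : ℝ => (1 - r) ^ c) (Ico 0 1) := fun c =>
    ContinuousOn.rpow_const (by fun_prop) fun r hr => Or.inl (by linarith [hr.2] : (0:ℝ) < 1 - r).ne'
  have hc2 : ∀ c : ℝ, ContinuousOn (fun r : ℝ => r ^ c) (Ioo 0 1) := fun c =>
    ContinuousOn.rpow_const (by fun_prop) fun r hr => Or.inl hr.1.ne'
  have hd1 : ∀ c r : ℝ, r ∈ Ioo (0:ℝ) 1 →
      HasDerivAt (fun r : ℝ => (1 - r) ^ c) (-(c * (1 - r) ^ (c - 1))) r := fun c r hr => by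
    have h1 : HasDerivAt (fun r : ℝ => 1 - r) (-1) r := by
      simpa using (hasDerivAt_id r).const_sub 1
    have := h1.rpow_const (p := c) (Or.inl (by linarith [hr.2]))
    exact this.congr_deriv (by ring)
  have hd2 : ∀ c r : ℝ, r ∈ Ioo (0:ℝ) 1 →
      HasDerivAt (fun r : ℝ => r ^ c) (c * r ^ (c - 1)) r := fun c r hr =>
    Real.hasDerivAt_rpow_const (Or.inl hr.1.ne')
  refine ⟨fun r => K * (1 - r) ^ (β/2) + |κ|, fun z => A * (z ^ b * (1 - z) ^ ε),
    fun z => A * (b * z ^ (b - 1) * (1 - z) ^ ε + z ^ b * (-(ε * (1 - z) ^ (ε - 1)))),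
    fun z => A / (4 * δ) * (1 - (1 - z) ^ δ), ?_⟩
  constructor
  · exact ((hc2 _).mul ((hc1 _).mono Ioo_subset_Ico_self)).div_const 4
  · intro r hr
    have h1 : 0 < 1 - r := by linarith [hr.2]
    have := hr.1
    unfold kf; positivity
  · exact (hc2 _).mul ((hc1 _).mono Ioo_subset_Ico_self)
  · intro r hr
    have h1 : 0 < 1 - r := by linarith [hr.2]
    have := hr.1
    unfold rf; positivity
  · intro r hr
    have h1 : 0 < 1 - r := by linarith [hr.2]
    positivity
  · have hN : Continuous (Nf R p) := by
      unfold Nf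
      exact Continuous.rpow_const (by fun_prop) fun _ => Or.inr (by linarith)
    have h1 : ContinuousOn (fun x : ℝ × ℝ => (1 - x.1) ^ (β/2)) (Ico 0 1 ×ˢ univ) :=
      (hc1 (β/2)).comp continuous_fst.continuousOn fun x hx => hx.1
    have h2 : Continuous (fun x : ℝ × ℝ => Nf R p x.2) := hN.comp continuous_snd
    exact (h1.mul h2.continuousOn).sub (by fun_prop)
  · intro r
    simp only [Ff, Nf, min_eq_left hR.le, max_self, mul_zero, sub_zero]
    rw [zero_rpow (by linarith), mul_zero]
  · intro r hr w w'
    have h1 : 0 < 1 - r := by linarith [hr.2]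
    have h2 : 0 < (1 - r) ^ (β/2) := by positivity
    have : Ff R p β κ r w - Ff R p β κ r w' =
      (1 - r) ^ (β/2) * (Nf R p w - Nf R p w') - κ * (w - w') := by unfold Ff; ring
    rw [this]
    refine (abs_sub _ _).trans ?_
    rw [abs_mul, abs_mul, abs_of_pos h2]
    have := mul_le_mul_of_nonneg_left (Nf_lip hR hp w w') h2.le
    rw [← hK] at this
    linarith
  · refine continuousOn_const.mul (ContinuousOn.mul ?_ (hc1 _))
    exact (Real.continuous_rpow_const hb.le).continuousOn
  · simp [zero_rpow hb.ne']
  · intro r hr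
    exact ((hd2 b r hr).mul (hd1 ε r hr)).const_mul A
  · intro r hr
    have h1 : 0 < 1 - r := by linarith [hr.2]
    have h1' : 1 - r ≤ 1 := by linarith [hr.1]
    have hr0 := hr.1
    have e1 : (1 - r) ^ (β/2) ≤ (1 - r) ^ (δ - 1) :=
      rpow_le_rpow_of_exponent_ge h1 h1' (by linarith)
    have e2 : 1 ≤ (1 - r) ^ (δ - 1) := by
      have := rpow_le_rpow_of_exponent_ge h1 h1' (show δ - 1 ≤ 0 by linarith)
      rwa [rpow_zero] at this
    have e3 : (1 - r) ^ ε = (1 - r) ^ (ε - 1) * (1 - r) := by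
      rw [← rpow_add_one h1.ne']; ring_nf
    have e4 : r ^ b = r ^ (b - 1) * r := by rw [← rpow_add_one hr0.ne']; ring_nf
    have e5 : (1 - r) ^ (ε - 1) = (1 - r) ^ (α - 1/2) * (1 - r) ^ (δ - 1) := by
      rw [← rpow_add h1]; congr 1; rw [hε]; ring
    have hB : 0 < r ^ (b - 1) * (1 - r) ^ (ε - 1) := by positivity
    have e6 : m ≤ b * (1 - r) + -ε * r := by
      have : m ≤ b := min_le_left _ _
      have : m ≤ -ε := min_le_right _ _
      nlinarith
    have e7 : (K + |κ|) = A * m := by rw [hA]; field_simp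
    calc rf b α r * (K * (1 - r) ^ (β/2) + |κ|)
        ≤ rf b α r * ((K + |κ|) * (1 - r) ^ (δ - 1)) := by
          apply mul_le_mul_of_nonneg_left
          · nlinarith [abs_nonneg κ]
          · unfold rf; positivity
      _ = (A * m) * (r ^ (b - 1) * (1 - r) ^ (ε - 1)) := by
          rw [← e7, e5]; unfold rf; ring
      _ ≤ (A * (b * (1 - r) + -ε * r)) * (r ^ (b - 1) * (1 - r) ^ (ε - 1)) := by gcongr
      _ = _ := by
          rw [e3, e4]; ring
  · have : Continuous fun z : ℝ => (1 - z) ^ δ :=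
      (Real.continuous_rpow_const hδ0.le).comp (by fun_prop)
    fun_prop
  · simp
  · intro r hr
    have h1 : 0 < 1 - r := by linarith [hr.2]
    have hr0 := hr.1
    refine (((hd1 δ r hr).const_sub 1).const_mul (A / (4 * δ))).congr_deriv ?_
    have e1 : (1 - r) ^ (δ - 1) = (1 - r) ^ (-1/2 - α) * (1 - r) ^ ε := by
      rw [← rpow_add h1]; congr 1; rw [hε]; ring
    have e2 : r ^ (-b) * r ^ b = 1 := by rw [← rpow_add hr0]; simp
    rw [e1]
    unfold kf
    calc _ = A / 4 * ((1 - r) ^ (-1/2 - α) * (1 - r) ^ ε) := by field_simp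
      _ = A / 4 * ((1 - r) ^ (-1/2 - α) * (1 - r) ^ ε) * (r ^ (-b) * r ^ b) := by rw [e2, mul_one]
      _ = _ := by ring

lemma exists_W {b α β κ p : ℝ} (hb : 0 < b) (hα : α < 1/2) (hβ : -2 < β) (hp : 1 < p)
    (hαβ : β = (p - 1) * α) :
    ∃ W P : ℝ → ℝ, Continuous W ∧ ContinuousOn P (Ico 0 1) ∧ P 0 = 0 ∧
      (∀ r ∈ Ioo (0:ℝ) 1, HasDerivAt W (kf b α r * P r) r) ∧
      (∀ r ∈ Ioo (0:ℝ) 1, HasDerivAt P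
        (rf b α r * ((1 - r) ^ (β / 2) * (W r) ^ p - κ * W r)) r) ∧
      (∀ r ∈ Icc (0:ℝ) 1, 0 < W r) := by
  have key : ∃ R > 0, ∃ g Q S : ℝ → ℝ, (∀ r ∈ Icc (0:ℝ) 1, g r ≤ R) ∧
      Continuous g ∧ (∀ r ∈ Icc (0:ℝ) 1, 0 < g r) ∧
      ContinuousOn Q (Ico 0 1) ∧ Q 0 ≤ 0 ∧
      (∀ r ∈ Ioo (0:ℝ) 1, HasDerivAt g (kf b α r * Q r) r) ∧
      (∀ r ∈ Ioo (0:ℝ) 1, HasDerivAt Q (rf b α r * S r) r) ∧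
      ContinuousOn S (Ico 0 1) ∧ (∀ r ∈ Ico (0:ℝ) 1, S r < (1 - r) ^ (β/2) * (g r) ^ p - κ * g r) := by
    have hCT : ∀ T > (0:ℝ), ∃ C > (0:ℝ), C ^ p = T * C := by
      intro T hT
      refine ⟨T ^ (1 / (p - 1)), by positivity, ?_⟩
      have hne : p - 1 ≠ 0 := by linarith
      rw [← rpow_mul hT.le]
      nth_rewrite 2 [← rpow_one T]
      rw [← rpow_add hT]
      congr 1
      field_simp
      ring
    rcases le_or_gt α 0 with hα0 | hα0
    · obtain ⟨C, hC, hCp⟩ := hCT (|κ| + 1) (by positivity)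
      refine ⟨C, hC, fun _ => C, fun _ => 0, fun _ => 0, fun _ _ => le_rfl, continuous_const,
        fun _ _ => hC, continuousOn_const, le_rfl, ?_, ?_, continuousOn_const, ?_⟩
      · intro r hr; simpa using hasDerivAt_const r C
      · intro r hr; simpa using hasDerivAt_const r (0:ℝ)
      · intro r hr
        have h1 : 0 < 1 - r := by linarith [hr.2]
        have h1' : 1 - r ≤ 1 := by linarith [hr.1]
        have hβ0 : β ≤ 0 := by rw [hαβ]; nlinarith
        have e2 : 1 ≤ (1 - r) ^ (β/2) := by
          have := rpow_le_rpow_of_exponent_ge h1 h1' (show β/2 ≤ 0 by linarith)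
          rwa [rpow_zero] at this
        simp only
        rw [hCp]
        have : (|κ| + 1) * C ≤ (1 - r) ^ (β/2) * ((|κ| + 1) * C) :=
          le_mul_of_one_le_left (by positivity) e2
        nlinarith [le_abs_self κ]
    · have hβ0 : 0 < β := by rw [hαβ]; exact mul_pos (by linarith) hα0
      set B := 2 * b + 2 * |κ| + 2 * α with hB
      have hBp : 0 < B := by positivity
      set s0 := 2 * α / B with hs0
      have hs0p : 0 < s0 := by positivity
      obtain ⟨C, hC, hCp⟩ := hCT ((B + 1) / s0 ^ β) (by positivity)
      refine ⟨2 * C, by positivity, fun r => C * (2 - sqrt (1 - r)),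
        fun r => 2 * C * (r ^ b * (1 - r) ^ α),
        fun r => 2 * C * (b * sqrt (1 - r) - α * r / sqrt (1 - r)), ?_, by fun_prop, ?_, ?_, ?_,
        ?_, ?_, ?_, ?_⟩
      · intro r hr
        nlinarith [sqrt_nonneg (1 - r)]
      · intro r hr
        have : sqrt (1 - r) ≤ 1 := Real.sqrt_le_iff.2 ⟨zero_le_one, by linarith [hr.1]⟩
        exact mul_pos hC (by linarith)
      · refine continuousOn_const.mul (ContinuousOn.mul
          (Real.continuous_rpow_const hb.le).continuousOn ?_)
        exact ((Real.continuous_rpow_const hα0.le).comp (by fun_prop : Continuous fun r : ℝ => 1 - r)).continuousOn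
      · simp [zero_rpow hb.ne']
      · intro r hr
        have h1 : 0 < 1 - r := by linarith [hr.2]
        have hr0 := hr.1
        have h2 : HasDerivAt (fun r : ℝ => 1 - r) (-1) r := by
          simpa using (hasDerivAt_id r).const_sub 1
        refine (((h2.sqrt h1.ne').const_sub 2).const_mul C).congr_deriv ?_
        have e2 : r ^ (-b) * r ^ b = 1 := by rw [← rpow_add hr0]; simp
        have e3 : (1 - r) ^ (-1/2 - α) * (1 - r) ^ α = 1 / sqrt (1 - r) := by
          rw [← rpow_add h1, sqrt_eq_rpow, one_div, ← rpow_neg h1.le]; congr 1; ring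
        unfold kf
        calc _ = C / 2 * (1 / sqrt (1 - r)) := by ring
          _ = C / 2 * ((1 - r) ^ (-1/2 - α) * (1 - r) ^ α) * (r ^ (-b) * r ^ b) := by
              rw [e2, e3, mul_one]
          _ = _ := by ring
      · intro r hr
        have h1 : 0 < 1 - r := by linarith [hr.2]
        have hr0 := hr.1
        have h2 : HasDerivAt (fun r : ℝ => 1 - r) (-1) r := by
          simpa using (hasDerivAt_id r).const_sub 1
        have h3 := h2.rpow_const (p := α) (Or.inl h1.ne')
        have h4 : HasDerivAt (fun r : ℝ => r ^ b) (b * r ^ (b - 1)) r :=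
          Real.hasDerivAt_rpow_const (Or.inl hr0.ne')
        refine ((h4.mul h3).const_mul (2 * C)).congr_deriv ?_
        have e4 : r ^ b = r ^ (b - 1) * r := by rw [← rpow_add_one hr0.ne']; ring_nf
        have e5 : (1 - r) ^ α = (1 - r) ^ (α - 1/2) * sqrt (1 - r) := by
          rw [sqrt_eq_rpow, ← rpow_add h1]; congr 1; ring
        have e6 : (1 - r) ^ (α - 1) = (1 - r) ^ (α - 1/2) * (1 / sqrt (1 - r)) := by
          rw [sqrt_eq_rpow, one_div ((1 - r) ^ (1/2:ℝ)), ← rpow_neg h1.le, ← rpow_add h1]; congr 1; ring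
        unfold rf
        rw [e4, e5, e6]
        ring
      · refine continuousOn_const.mul (ContinuousOn.sub (by fun_prop) ?_)
        refine ContinuousOn.div (by fun_prop) (by fun_prop) fun r hr => ?_
        have h1 : 0 < 1 - r := by linarith [hr.2]
        positivity
      · intro r hr
        have h1 : 0 < 1 - r := by linarith [hr.2]
        have h1' : 1 - r ≤ 1 := by linarith [hr.1]
        have e1 : (1 - r) ^ (β/2) = sqrt (1 - r) ^ β := by
          rw [sqrt_eq_rpow, ← rpow_mul h1.le]; congr 1; ring
        have e2 : r = 1 - sqrt (1 - r) ^ 2 := by rw [sq_sqrt h1.le]; ring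
        set s := sqrt (1 - r) with hs
        have hsp : 0 < s := by positivity
        have hs1 : s ≤ 1 := Real.sqrt_le_iff.2 ⟨zero_le_one, by linarith [hr.1]⟩
        simp only
        rw [e1]
        have e3 : (B + 1) / s0 ^ β * C ≤ (C * (2 - s)) ^ p := by
          rw [← hCp]
          exact rpow_le_rpow hC.le (by nlinarith) (by linarith)
        have e4 : s ^ β * ((B + 1) / s0 ^ β * C) ≤ s ^ β * (C * (2 - s)) ^ p :=
          mul_le_mul_of_nonneg_left e3 (by positivity)
        refine lt_of_lt_of_le ?_ (sub_le_sub_right e4 _)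
        have e5 : α * r / s = α / s - α * s := by
          rw [e2]; field_simp
        rw [e5]
        have e6 : B < s ^ β * ((B + 1) / s0 ^ β) + 2 * (α / s) := by
          rcases lt_or_ge s s0 with hlt | hge
          · have : B < 2 * (α / s) := by
              rw [hs0, lt_div_iff₀ hBp] at hlt
              rw [← mul_div_assoc, lt_div_iff₀ hsp]
              linarith
            have : 0 < s ^ β * ((B + 1) / s0 ^ β) := by positivity
            linarith
          · have h3 : s0 ^ β ≤ s ^ β := rpow_le_rpow hs0p.le hge hβ0.le
            have : B + 1 ≤ s ^ β * ((B + 1) / s0 ^ β) := by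
              rw [← mul_div_assoc, le_div_iff₀ (by positivity)]
              nlinarith
            have : 0 < α / s := by positivity
            linarith
        have e7 : 2 * (b * s + α * s) + κ * (2 - s) ≤ B := by
          have h5 : κ * (2 - s) ≤ |κ| * (2 - s) :=
            mul_le_mul_of_nonneg_right (le_abs_self κ) (by linarith)
          have h6 : |κ| * (2 - s) ≤ |κ| * 2 :=
            mul_le_mul_of_nonneg_left (by linarith) (abs_nonneg κ)
          nlinarith
        have e8 := mul_lt_mul_of_pos_left (lt_of_le_of_lt e7 e6) hC
        linarith
  obtain ⟨R, hR, g, Q, S, hgR, hgc, hg0, hQc, hQ0, hg, hQ, hSc, hS⟩ := key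
  obtain ⟨L, η, ηd, Φ, hVD⟩ := exists_VD (κ := κ) hb hα hβ hp hR
  have hN : ∀ w, 0 ≤ w → w ≤ R → Nf R p w = w ^ p := fun w h0 h1 => by
    unfold Nf; rw [min_eq_left h1, max_eq_right h0]
  obtain ⟨W, P, h1, h2, h3, h4, h5, h6⟩ := hVD.shoot hgc hg0 hQc hQ0 hg hQ hSc (by
    intro r hr
    have hr' : r ∈ Icc (0:ℝ) 1 := ⟨hr.1, hr.2.le⟩
    unfold Ff
    rw [hN _ (hg0 r hr').le (hgR r hr')]
    exact hS r hr)
  refine ⟨W, P, h1, h2, h3, h4, fun r hr => ?_, fun r hr => (h6 r hr).1⟩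
  have hr' : r ∈ Icc (0:ℝ) 1 := ⟨hr.1.le, hr.2.le⟩
  have := h5 r hr
  unfold Ff at this
  rwa [hN _ (h6 r hr').1.le ((h6 r hr').2.trans (hgR r hr'))] at this

lemma half_ext {f f' : ℝ → ℝ} {l : ℝ} (hf : ContinuousOn f (Ico 0 1))
    (hd : ∀ r ∈ Ioo (0:ℝ) 1, HasDerivAt f (f' r) r) (hc : ContinuousOn f' (Ioo 0 1))
    (hl : Tendsto f' (𝓝[>] 0) (𝓝 l)) :
    ∃ g : ℝ → ℝ, (∀ r ∈ Ioo (0:ℝ) 1, g r = f' r) ∧ ContinuousOn g (Ico 0 1) ∧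
      ∀ r ∈ Ico (0:ℝ) 1, HasDerivWithinAt f (g r) (Ico 0 1) r := by
  have hg : ∀ r ∈ Ioo (0:ℝ) 1, Function.update f' 0 l r = f' r := fun r hr =>
    Function.update_of_ne hr.1.ne' _ _
  have hmem : Ioo (0:ℝ) 1 ∈ 𝓝[>] (0:ℝ) := Ioo_mem_nhdsGT one_pos
  refine ⟨Function.update f' 0 l, hg, ?_, ?_⟩
  · intro r hr
    rcases eq_or_lt_of_le hr.1 with h | h
    · subst h
      rw [continuousWithinAt_update_same]
      refine hl.mono_left (nhdsWithin_mono _ ?_)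
      rintro x ⟨hx, hx0⟩
      exact lt_of_le_of_ne hx.1 (Ne.symm hx0)
    · have h1 : ContinuousAt f' r := hc.continuousAt (Ioo_mem_nhds h hr.2)
      refine (h1.congr ?_).continuousWithinAt
      filter_upwards [Ioo_mem_nhds h hr.2] with x hx using (hg x hx).symm
  · intro r hr
    rcases eq_or_lt_of_le hr.1 with h | h
    · subst h
      rw [Function.update_self]
      refine (hasDerivWithinAt_Ici_of_tendsto_deriv (s := Ioo 0 1) ?_ ?_ hmem ?_).mono
        Ico_subset_Ici_self
      · exact fun x hx => (hd x hx).differentiableAt.differentiableWithinAt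
      · exact (hf 0 hr).mono Ioo_subset_Ico_self
      · refine hl.congr' ?_
        filter_upwards [hmem] with x hx using (hd x hx).deriv.symm
    · rw [hg r ⟨h, hr.2⟩]
      exact (hd r ⟨h, hr.2⟩).hasDerivWithinAt

lemma cd_succ {f g : ℝ → ℝ} {m : ℕ} (h : ∀ r ∈ Ico (0:ℝ) 1, HasDerivWithinAt f (g r) (Ico 0 1) r)
    (hg : ContDiffOn ℝ m g (Ico 0 1)) : ContDiffOn ℝ (m + 1) f (Ico 0 1) := by
  have hu : UniqueDiffOn ℝ (Ico (0:ℝ) 1) := uniqueDiffOn_Ico 0 1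
  rw [contDiffOn_succ_iff_derivWithin hu]
  refine ⟨fun r hr => (h r hr).differentiableWithinAt, by simp, ?_⟩
  exact hg.congr fun r hr => (h r hr).derivWithin (hu r hr)

lemma W_reg {b α β κ p : ℝ} (hb : 0 < b) {W P : ℝ → ℝ} (hW : Continuous W)
    (hP : ContinuousOn P (Ico 0 1)) (hP0 : P 0 = 0)
    (hWd : ∀ r ∈ Ioo (0:ℝ) 1, HasDerivAt W (kf b α r * P r) r)
    (hPd : ∀ r ∈ Ioo (0:ℝ) 1, HasDerivAt P
        (rf b α r * ((1 - r) ^ (β / 2) * (W r) ^ p - κ * W r)) r)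
    (hWp : ∀ r ∈ Icc (0:ℝ) 1, 0 < W r) :
    ContDiffOn ℝ 2 W (Ico 0 1) := by
  have hmem : Ioo (0:ℝ) 1 ∈ 𝓝[>] (0:ℝ) := Ioo_mem_nhdsGT one_pos
  have h0 : (0:ℝ) ∈ Ico (0:ℝ) 1 := ⟨le_rfl, one_pos⟩
  have hle : 𝓝[>] (0:ℝ) ≤ 𝓝[Ico 0 1] 0 := by
    rw [← nhdsWithin_Ioo_eq_nhdsGT (one_pos (α := ℝ))]
    exact nhdsWithin_mono _ Ioo_subset_Ico_self
  have hcs : ∀ c : ℝ, ∀ m : ℕ∞, ContDiffOn ℝ m (fun r : ℝ => (1 - r) ^ c) (Ico 0 1) := fun c m r hr =>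
    (ContDiffAt.rpow_const_of_ne (by fun_prop)
      (by linarith [hr.2] : (0:ℝ) < 1 - r).ne').contDiffWithinAt
  have hWne : ∀ r ∈ Ico (0:ℝ) 1, W r ≠ 0 := fun r hr => (hWp r ⟨hr.1, hr.2.le⟩).ne'
  set H : ℝ → ℝ := fun r => (1 - r) ^ (α - 1/2) * ((1 - r) ^ (β / 2) * (W r) ^ p - κ * W r) with hH
  have hHs : ∀ m : ℕ∞, ContDiffOn ℝ m W (Ico 0 1) → ContDiffOn ℝ m H (Ico 0 1) := fun m h =>
    (hcs _ m).mul (((hcs _ m).mul (h.rpow_const_of_ne hWne)).sub (contDiffOn_const.mul h))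
  have hHc : ContinuousOn H (Ico 0 1) := by
    have := hHs 0 (by exact_mod_cast contDiffOn_zero.2 hW.continuousOn)
    exact this.continuousOn
  have hPd' : ∀ r ∈ Ioo (0:ℝ) 1, HasDerivAt P (r ^ (b - 1) * H r) r := fun r hr =>
    (hPd r hr).congr_deriv (by simp only [hH, rf]; ring)
  have hpd : ∀ c : ℝ, ∀ r ∈ Ioo (0:ℝ) 1, HasDerivAt (fun r : ℝ => r ^ c) (c * r ^ (c - 1)) r :=
    fun c r hr => Real.hasDerivAt_rpow_const (Or.inl hr.1.ne')
  have hpt : ∀ c : ℝ, 0 < c → Tendsto (fun r : ℝ => r ^ c) (𝓝[>] 0) (𝓝 0) := fun c hc => by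
    have := (Real.continuous_rpow_const hc.le).tendsto 0
    rw [zero_rpow hc.ne'] at this
    exact this.mono_left nhdsWithin_le_nhds
  have hPt : Tendsto P (𝓝[>] 0) (𝓝 0) := by
    have : Tendsto P (𝓝[Ico 0 1] 0) (𝓝 (P 0)) := hP 0 h0
    rw [hP0] at this
    exact this.mono_left hle
  have hHt : Tendsto H (𝓝[>] 0) (𝓝 (H 0)) :=
    Tendsto.mono_left (show Tendsto H (𝓝[Ico 0 1] 0) (𝓝 (H 0)) from hHc 0 h0) hle
  have hJt : Tendsto (fun r => P r / r ^ b) (𝓝[>] 0) (𝓝 (H 0 / b)) := by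
    refine HasDerivAt.lhopital_zero_nhdsGT (f' := fun r => r ^ (b - 1) * H r)
      (g' := fun r => b * r ^ (b - 1)) ?_ ?_ ?_ hPt (hpt b hb) ?_
    · filter_upwards [hmem] with r hr using hPd' r hr
    · filter_upwards [hmem] with r hr using hpd b r hr
    · filter_upwards [hmem] with r hr
      have := hr.1
      positivity
    · refine (hHt.div_const b).congr' ?_
      filter_upwards [hmem] with r hr
      have : 0 < r ^ (b - 1) := rpow_pos_of_pos hr.1 _
      field_simp
  set c : ℝ → ℝ := fun r => (1 - r) ^ (-1/2 - α) / 4 with hc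
  have hcC : ContDiffOn ℝ 1 c (Ico 0 1) := (hcs _ 1).div_const 4
  have hct : Tendsto c (𝓝[>] 0) (𝓝 (c 0)) :=
    Tendsto.mono_left (show Tendsto c (𝓝[Ico 0 1] 0) (𝓝 (c 0)) from hcC.continuousOn 0 h0) hle
  have hkP : ∀ r ∈ Ioo (0:ℝ) 1, kf b α r * P r = c r * (P r / r ^ b) := by
    intro r hr
    simp only [kf, hc, rpow_neg hr.1.le]
    ring
  have hJc : ContinuousOn (fun r => P r / r ^ b) (Ioo 0 1) :=
    (hP.mono Ioo_subset_Ico_self).div (fun r hr => (hpd b r hr).continuousAt.continuousWithinAt)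
      fun r hr => (rpow_pos_of_pos hr.1 _).ne'
  obtain ⟨V, hV, hVc, hWV⟩ := half_ext (f' := fun r => c r * (P r / r ^ b)) hW.continuousOn
    (fun r hr => (hWd r hr).congr_deriv (hkP r hr))
    ((hcC.continuousOn.mono Ioo_subset_Ico_self).mul hJc) (hct.mul hJt)
  have hW1 : ContDiffOn ℝ 1 W (Ico 0 1) := by
    have := cd_succ (m := 0) hWV (by exact_mod_cast contDiffOn_zero.2 hVc)
    simpa using this
  have hH1 : ContDiffOn ℝ 1 H (Ico 0 1) := hHs 1 hW1
  have hu : UniqueDiffOn ℝ (Ico (0:ℝ) 1) := uniqueDiffOn_Ico 0 1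
  have hDer : ∀ f : ℝ → ℝ, ContDiffOn ℝ 1 f (Ico 0 1) → ∃ f1 : ℝ → ℝ, ContinuousOn f1 (Ico 0 1) ∧
      (∀ r ∈ Ioo (0:ℝ) 1, HasDerivAt f (f1 r) r) ∧ Tendsto f1 (𝓝[>] 0) (𝓝 (f1 0)) := by
    intro f hf
    have hcont := hf.continuousOn_derivWithin hu le_rfl
    refine ⟨derivWithin f (Ico 0 1), hcont, fun r hr => ?_, ?_⟩
    · exact ((hf.differentiableOn one_ne_zero r
        (Ioo_subset_Ico_self hr)).hasDerivWithinAt).hasDerivAt (Ico_mem_nhds hr.1 hr.2)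
    · exact Tendsto.mono_left (show Tendsto _ (𝓝[Ico 0 1] 0) (𝓝 _) from hcont 0 h0) hle
  obtain ⟨H1, hH1c, hH1d, hH1t⟩ := hDer H hH1
  obtain ⟨c1, hc1c, hc1d, hc1t⟩ := hDer c hcC
  set N : ℝ → ℝ := fun r => (r ^ b * H r - b * P r) / r ^ (b + 1) with hN
  have hNt : Tendsto N (𝓝[>] 0) (𝓝 (H1 0 / (b + 1))) := by
    refine HasDerivAt.lhopital_zero_nhdsGT (f' := fun r => r ^ b * H1 r)
      (g' := fun r => (b + 1) * r ^ (b + 1 - 1)) ?_ ?_ ?_ ?_ (hpt (b + 1) (by linarith)) ?_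
    · filter_upwards [hmem] with r hr
      refine (((hpd b r hr).mul (hH1d r hr)).sub ((hPd' r hr).const_mul b)).congr_deriv ?_
      ring
    · filter_upwards [hmem] with r hr using hpd (b + 1) r hr
    · filter_upwards [hmem] with r hr
      have := hr.1
      positivity
    · simpa using ((hpt b hb).mul hHt).sub (hPt.const_mul b)
    · refine (hH1t.div_const (b + 1)).congr' ?_
      filter_upwards [hmem] with r hr
      have : 0 < r ^ b := rpow_pos_of_pos hr.1 _
      have : b + 1 ≠ 0 := by linarith
      rw [add_sub_cancel_right]
      field_simp
  have hJd : ∀ r ∈ Ioo (0:ℝ) 1, HasDerivAt (fun r => P r / r ^ b) (N r) r := by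
    intro r hr
    have hr0 := hr.1
    have hpos : 0 < r ^ b := rpow_pos_of_pos hr.1 _
    refine ((hPd' r hr).div (hpd b r hr) hpos.ne').congr_deriv ?_
    simp only [hN]
    have e1 : r ^ (b - 1) = r ^ b / r := by rw [rpow_sub_one hr0.ne']
    have e2 : r ^ (b + 1) = r ^ b * r := by rw [rpow_add_one hr0.ne']
    rw [e1, e2]
    field_simp
  have hNc : ContinuousOn N (Ioo 0 1) := by
    refine ContinuousOn.div (((ContinuousOn.mul ?_ (hHc.mono Ioo_subset_Ico_self))).sub
      (continuousOn_const.mul (hP.mono Ioo_subset_Ico_self))) ?_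
      fun r hr => (rpow_pos_of_pos hr.1 _).ne'
    · exact fun r hr => (hpd b r hr).continuousAt.continuousWithinAt
    · exact fun r hr => (hpd (b + 1) r hr).continuousAt.continuousWithinAt
  obtain ⟨V1, -, hV1c, hVV1⟩ := half_ext (f := V)
    (f' := fun r => c1 r * (P r / r ^ b) + c r * N r) hVc (fun r hr => by
      refine ((hc1d r hr).mul (hJd r hr)).congr_of_eventuallyEq ?_
      filter_upwards [Ioo_mem_nhds hr.1 hr.2] with x hx using hV x hx)
    (((hc1c.mono Ioo_subset_Ico_self).mul hJc).add
      ((hcC.continuousOn.mono Ioo_subset_Ico_self).mul hNc))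
    ((hc1t.mul hJt).add (hct.mul hNt))
  have hV1 : ContDiffOn ℝ 1 V (Ico 0 1) := by
    have := cd_succ (m := 0) hVV1 (by exact_mod_cast contDiffOn_zero.2 hV1c)
    simpa using this
  have := cd_succ (m := 1) hWV (by exact_mod_cast hV1)
  exact_mod_cast this

lemma W_ode {b α β κ p : ℝ} {W P : ℝ → ℝ}
    (hWd : ∀ r ∈ Ioo (0:ℝ) 1, HasDerivAt W (kf b α r * P r) r)
    (hPd : ∀ r ∈ Ioo (0:ℝ) 1, HasDerivAt P
        (rf b α r * ((1 - r) ^ (β / 2) * (W r) ^ p - κ * W r)) r) :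
    ∃ w1 w2 : ℝ → ℝ, (∀ r ∈ Ioo (0:ℝ) 1, HasDerivAt W (w1 r) r) ∧
      (∀ r ∈ Ioo (0:ℝ) 1, HasDerivAt w1 (w2 r) r) ∧
      ∀ r ∈ Ioo (0:ℝ) 1, 4 * r * (1 - r) * w2 r + (4 * b * (1 - r) - (2 + 4 * α) * r) * w1 r
        = (1 - r) ^ (β / 2) * (W r) ^ p - κ * W r := by
  refine ⟨fun r => kf b α r * P r, fun r => kf b α r * (-b / r + (1/2 + α) / (1 - r)) * P r +
    kf b α r * (rf b α r * ((1 - r) ^ (β / 2) * (W r) ^ p - κ * W r)), hWd, ?_, ?_⟩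
  · intro r hr
    refine HasDerivAt.mul ?_ (hPd r hr)
    have h1 : 0 < 1 - r := by linarith [hr.2]
    have hr0 := hr.1
    have h2 : HasDerivAt (fun r : ℝ => 1 - r) (-1) r := by
      simpa using (hasDerivAt_id r).const_sub 1
    have h3 := h2.rpow_const (p := -1/2 - α) (Or.inl h1.ne')
    have h4 : HasDerivAt (fun r : ℝ => r ^ (-b)) (-b * r ^ (-b - 1)) r :=
      Real.hasDerivAt_rpow_const (Or.inl hr0.ne')
    refine ((h4.mul h3).div_const 4).congr_deriv ?_
    rw [rpow_sub_one hr0.ne', rpow_sub_one h1.ne']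
    unfold kf
    field_simp
    ring
  · intro r hr
    have h1 : 0 < 1 - r := by linarith [hr.2]
    have hr0 := hr.1
    have e1 : kf b α r * rf b α r * (4 * r * (1 - r)) = 1 := by
      unfold kf rf
      have a1 : r ^ (-b) * r ^ (b - 1) * r = 1 := by
        rw [← rpow_add hr0, ← rpow_add_one hr0.ne']
        convert rpow_zero r using 2; ring
      have a2 : (1 - r) ^ (-1/2 - α) * (1 - r) ^ (α - 1/2) * (1 - r) = 1 := by
        rw [← rpow_add h1, ← rpow_add_one h1.ne']
        convert rpow_zero (1 - r) using 2; ring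
      calc _ = (r ^ (-b) * r ^ (b - 1) * r) * ((1 - r) ^ (-1/2 - α) * (1 - r) ^ (α - 1/2) * (1 - r)) := by ring
        _ = 1 := by rw [a1, a2, mul_one]
    set F := (1 - r) ^ (β / 2) * (W r) ^ p - κ * W r
    have e2 : 4 * r * (1 - r) * (-b / r + (1/2 + α) / (1 - r)) =
      -(4 * b * (1 - r) - (2 + 4 * α) * r) := by field_simp; ring
    calc _ = (4 * r * (1 - r) * (-b / r + (1/2 + α) / (1 - r))) * (kf b α r * P r) +
        (kf b α r * rf b α r * (4 * r * (1 - r))) * F +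
        (4 * b * (1 - r) - (2 + 4 * α) * r) * (kf b α r * P r) := by ring
      _ = F := by rw [e1, e2]; ring

lemma v_ode {α β μ p N Lγ : ℝ} {W w1 w2 : ℝ → ℝ}
    (hαμ : α ^ 2 - α + μ = 0) (hαβ : β = (p - 1) * α)
    (hW : ∀ r ∈ Ioo (0:ℝ) 1, HasDerivAt W (w1 r) r)
    (hw1 : ∀ r ∈ Ioo (0:ℝ) 1, HasDerivAt w1 (w2 r) r)
    (hode : ∀ r ∈ Ioo (0:ℝ) 1, 4 * r * (1 - r) * w2 r +
        (4 * ((N - 1) / 2) * (1 - r) - (2 + 4 * α) * r) * w1 r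
        = (1 - r) ^ (β / 2) * (W r) ^ p - (Lγ - α * (α + N - 2)) * W r)
    (hWp : ∀ r ∈ Icc (0:ℝ) 1, 0 < W r) :
    ∃ v1 v2 : ℝ → ℝ, (∀ t ∈ Ioo (0:ℝ) 1, HasDerivAt (fun t => t ^ α * W (1 - t ^ 2)) (v1 t) t) ∧
      (∀ t ∈ Ioo (0:ℝ) 1, HasDerivAt v1 (v2 t) t) ∧
      ∀ t ∈ Ioo (0:ℝ) 1, (1 - t ^ 2) * v2 t - (N - 1) * t * v1 t
          + (μ / t ^ 2) * (t ^ α * W (1 - t ^ 2)) + Lγ * (t ^ α * W (1 - t ^ 2))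
          = (t ^ α * W (1 - t ^ 2)) ^ p := by
  have hmem : ∀ t ∈ Ioo (0:ℝ) 1, 1 - t ^ 2 ∈ Ioo (0:ℝ) 1 := fun t ht =>
    ⟨by nlinarith [ht.1, ht.2], by nlinarith [ht.1, ht.2]⟩
  have hy : ∀ t : ℝ, HasDerivAt (fun t : ℝ => 1 - t ^ 2) (-(2 * t)) t := fun t => by
    simpa using (hasDerivAt_pow 2 t).const_sub 1
  have hpw : ∀ c : ℝ, ∀ t ∈ Ioo (0:ℝ) 1, HasDerivAt (fun t : ℝ => t ^ c) (c * t ^ (c - 1)) t :=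
    fun c t ht => Real.hasDerivAt_rpow_const (Or.inl ht.1.ne')
  have hWc : ∀ t ∈ Ioo (0:ℝ) 1, HasDerivAt (fun t : ℝ => W (1 - t ^ 2))
      (w1 (1 - t ^ 2) * (-(2 * t))) t := fun t ht => (hW _ (hmem t ht)).comp t (hy t)
  have hwc : ∀ t ∈ Ioo (0:ℝ) 1, HasDerivAt (fun t : ℝ => w1 (1 - t ^ 2))
      (w2 (1 - t ^ 2) * (-(2 * t))) t := fun t ht => (hw1 _ (hmem t ht)).comp t (hy t)
  have hlin : ∀ t : ℝ, HasDerivAt (fun t : ℝ => -(2 * t)) (-2) t := fun t => by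
    simpa using (hasDerivAt_id t).const_mul (-2:ℝ)
  refine ⟨fun t => (α * t ^ (α - 1)) * W (1 - t ^ 2) + t ^ α * (w1 (1 - t ^ 2) * (-(2 * t))),
    fun t => ((α * ((α - 1) * t ^ (α - 1 - 1))) * W (1 - t ^ 2) +
      (α * t ^ (α - 1)) * (w1 (1 - t ^ 2) * (-(2 * t)))) +
      ((α * t ^ (α - 1)) * (w1 (1 - t ^ 2) * (-(2 * t))) +
        t ^ α * ((w2 (1 - t ^ 2) * (-(2 * t))) * (-(2 * t)) + w1 (1 - t ^ 2) * (-2))), ?_, ?_, ?_⟩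
  · intro t ht
    exact (hpw α t ht).mul (hWc t ht)
  · intro t ht
    exact (((hpw (α - 1) t ht).const_mul α).mul (hWc t ht)).add
      ((hpw α t ht).mul ((hwc t ht).mul (hlin t)))
  · intro t ht
    have ht0 := ht.1
    have hm := hmem t ht
    have hWpos := hWp _ ⟨hm.1.le, hm.2.le⟩
    have ho := hode _ hm
    have e1 : (1 - (1 - t ^ 2)) = t ^ 2 := by ring
    have e2 : (t ^ 2) ^ (β / 2) = t ^ β := by
      rw [← rpow_natCast, ← rpow_mul ht0.le]; congr 1; push_cast; ring
    have e3 : (t ^ α * W (1 - t ^ 2)) ^ p = t ^ α * (t ^ β * W (1 - t ^ 2) ^ p) := by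
      rw [mul_rpow (by positivity) hWpos.le, ← rpow_mul ht0.le, ← mul_assoc, ← rpow_add ht0]
      congr 2; rw [hαβ]; ring
    rw [e1, e2] at ho
    have e4 : t ^ β * W (1 - t ^ 2) ^ p = 4 * (1 - t ^ 2) * t ^ 2 * w2 (1 - t ^ 2) +
        (4 * ((N - 1) / 2) * t ^ 2 - (2 + 4 * α) * (1 - t ^ 2)) * w1 (1 - t ^ 2) +
        (Lγ - α * (α + N - 2)) * W (1 - t ^ 2) := by linarith
    beta_reduce
    rw [e3, e4, rpow_sub_one ht0.ne', rpow_sub_one ht0.ne']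
    have hμ : μ = α - α ^ 2 := by linarith
    rw [hμ]
    generalize W (1 - t ^ 2) = A
    generalize w1 (1 - t ^ 2) = B
    generalize w2 (1 - t ^ 2) = C
    field_simp
    ring

/-- one-dimensional second derivative computation. -/
lemma line_deriv {γ a ξ δ : ℝ} {v v1 v2 ρ : ℝ → ℝ}
    (hρ : ∀ᶠ s in 𝓝 (0:ℝ), 0 < ρ s ∧ HasDerivAt ρ ((a + s) / ρ s) s)
    (hv : ∀ t ∈ Ioo (0:ℝ) 1, HasDerivAt v (v1 t) t)
    (hv1 : ∀ t ∈ Ioo (0:ℝ) 1, HasDerivAt v1 (v2 t) t)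
    (ht : ξ / ρ 0 ∈ Ioo (0:ℝ) 1) :
    ∃ φ1 : ℝ → ℝ,
      (∀ᶠ s in 𝓝 (0:ℝ), HasDerivAt (fun s => ρ s ^ γ * v ((ξ + δ * s) / ρ s)) (φ1 s) s) ∧
      HasDerivAt φ1 (
        ρ 0 ^ γ * ((γ / ρ 0 ^ 2 + γ * (γ - 2) * a ^ 2 / ρ 0 ^ 4) * v (ξ / ρ 0)
          + (2 * γ * a / ρ 0 ^ 2 * (δ / ρ 0 - ξ * a / ρ 0 ^ 3)
             + (- 2 * δ * a / ρ 0 ^ 3 - ξ / ρ 0 ^ 3 + 3 * ξ * a ^ 2 / ρ 0 ^ 5)) * v1 (ξ / ρ 0)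
          + (δ / ρ 0 - ξ * a / ρ 0 ^ 3) ^ 2 * v2 (ξ / ρ 0))) 0 := by
  have hρ0 := hρ.self_of_nhds
  have hA : ∀ s, 0 < ρ s → HasDerivAt ρ ((a + s) / ρ s) s →
      HasDerivAt (fun s => ρ s ^ γ) (γ * (ρ s ^ γ * ((a + s) / ρ s ^ 2))) s := fun s h0 h => by
    refine (h.rpow_const (p := γ) (Or.inl h0.ne')).congr_deriv ?_
    rw [rpow_sub_one h0.ne']
    field_simp
  have hlin : ∀ s : ℝ, HasDerivAt (fun s => ξ + δ * s) δ s := fun s => by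
    simpa using ((hasDerivAt_id s).const_mul δ).const_add ξ
  have hlin2 : ∀ s : ℝ, HasDerivAt (fun s => a + s) 1 s := fun s => by
    simpa using (hasDerivAt_id s).const_add a
  have hT : ∀ s, 0 < ρ s → HasDerivAt ρ ((a + s) / ρ s) s →
      HasDerivAt (fun s => (ξ + δ * s) / ρ s) (δ / ρ s - (ξ + δ * s) * (a + s) / ρ s ^ 3) s :=
    fun s h0 h => by
    refine ((hlin s).div h h0.ne').congr_deriv ?_
    field_simp
  have hTe : ∀ᶠ s in 𝓝 (0:ℝ), (ξ + δ * s) / ρ s ∈ Ioo (0:ℝ) 1 := by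
    have := (hT 0 hρ0.1 hρ0.2).continuousAt
    refine this.eventually (isOpen_Ioo.mem_nhds ?_)
    simpa using ht
  refine ⟨fun s => (γ * (ρ s ^ γ * ((a + s) / ρ s ^ 2))) * v ((ξ + δ * s) / ρ s) +
    ρ s ^ γ * (v1 ((ξ + δ * s) / ρ s) * (δ / ρ s - (ξ + δ * s) * (a + s) / ρ s ^ 3)), ?_, ?_⟩
  · filter_upwards [hρ, hTe] with s hs hs2
    exact (hA s hs.1 hs.2).mul ((hv _ hs2).comp s (hT s hs.1 hs.2))
  · have ht' := hTe.self_of_nhds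
    obtain ⟨h0, hd⟩ := hρ0
    have dA := hA 0 h0 hd
    have dT := hT 0 h0 hd
    have dv := (hv _ ht').comp (0:ℝ) dT
    have dv1 := (hv1 _ ht').comp (0:ℝ) dT
    have d2 := (hlin2 0).div (hd.pow 2) (pow_pos h0 2).ne'
    have d3 := ((hlin 0).mul (hlin2 0)).div (hd.pow 3) (pow_pos h0 3).ne'
    have d4 := ((hasDerivAt_const (0:ℝ) δ).div hd h0.ne').sub d3
    have := (((dA.mul d2).const_mul γ).mul dv).add (dA.mul (dv1.mul d4))
    refine this.congr_deriv ?_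
    simp only [Function.comp, Pi.pow_apply, Pi.mul_apply, Pi.div_apply, Pi.sub_apply, mul_zero, add_zero]
    generalize v (ξ / ρ 0) = A
    generalize v1 (ξ / ρ 0) = B
    generalize v2 (ξ / ρ 0) = C
    generalize ρ 0 ^ γ = D
    generalize ρ 0 = R at h0
    field_simp
    ring

lemma second_line {E : Type*} [NormedAddCommGroup E] [NormedSpace ℝ E] {u : E → ℝ} {x e : E}
    (hu : ContDiffAt ℝ 2 u x) {φ1 : ℝ → ℝ} {φ2 : ℝ}
    (h1 : ∀ᶠ s in 𝓝 (0:ℝ), HasDerivAt (fun s : ℝ => u (x + s • e)) (φ1 s) s)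
    (h2 : HasDerivAt φ1 φ2 0) : iteratedFDeriv ℝ 2 u x ![e, e] = φ2 := by
  rw [iteratedFDeriv_two_apply]
  simp only [Matrix.cons_val_zero, Matrix.cons_val_one]
  have hl : ∀ s : ℝ, HasDerivAt (fun s : ℝ => x + s • e) e s := fun s => by
    simpa using ((hasDerivAt_id s).smul_const e).const_add x
  have hx0 : x + (0:ℝ) • e = x := by simp
  have hd : ∀ᶠ y in 𝓝 x, DifferentiableAt ℝ u y := by
    have := hu.eventually (by simp)
    filter_upwards [this] with y hy using hy.differentiableAt (by simp)
  have hd' : ∀ᶠ s in 𝓝 (0:ℝ), DifferentiableAt ℝ u (x + s • e) := by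
    have hc : Tendsto (fun s : ℝ => x + s • e) (𝓝 0) (𝓝 x) := by
      have := (hl 0).continuousAt.tendsto
      rwa [hx0] at this
    exact hc.eventually hd
  have heq : (fun s : ℝ => fderiv ℝ u (x + s • e) e) =ᶠ[𝓝 0] φ1 := by
    filter_upwards [h1, hd'] with s hs hs'
    exact (hs'.hasFDerivAt.comp_hasDerivAt s (hl s)).unique hs
  have h3 : HasFDerivAt (fderiv ℝ u) (fderiv ℝ (fderiv ℝ u) x) (x + (0:ℝ) • e) := by
    rw [hx0]
    have : ContDiffAt ℝ 1 (fderiv ℝ u) x := hu.fderiv_right (by norm_num)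
    exact (this.differentiableAt (by simp)).hasFDerivAt
  have h4 := h3.comp_hasDerivAt (0:ℝ) (hl 0)
  have h5 : HasDerivAt (fun s : ℝ => fderiv ℝ u (x + s • e) e)
      (fderiv ℝ (fderiv ℝ u) x e e) 0 := by
    simpa using h4.clm_apply (hasDerivAt_const (0:ℝ) e)
  exact h5.unique (h2.congr_of_eventuallyEq heq)

lemma lap_formula {n : ℕ} (hn : 2 ≤ n) {γ : ℝ} {v v1 v2 : ℝ → ℝ}
    (hv : ∀ t ∈ Ioo (0:ℝ) 1, HasDerivAt v (v1 t) t)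
    (hv1 : ∀ t ∈ Ioo (0:ℝ) 1, HasDerivAt v1 (v2 t) t)
    {x : EuclideanSpace ℝ (Fin n)} (hx : x1 x / ‖x‖ ∈ Ioo (0:ℝ) 1)
    (hu : ContDiffAt ℝ 2 (fun x : EuclideanSpace ℝ (Fin n) => ‖x‖ ^ γ * v (x1 x / ‖x‖)) x) :
    lap (fun x : EuclideanSpace ℝ (Fin n) => ‖x‖ ^ γ * v (x1 x / ‖x‖)) x =
      ‖x‖ ^ γ / ‖x‖ ^ 2 * (Lam n γ * v (x1 x / ‖x‖) +
        (1 - (x1 x / ‖x‖) ^ 2) * v2 (x1 x / ‖x‖) - ((n:ℝ) - 1) * (x1 x / ‖x‖) * v1 (x1 x / ‖x‖)) := by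
  have hn0 : 0 < n := by omega
  have hxne : x ≠ 0 := by
    rintro rfl
    simp at hx
  have hρ0 : 0 < ‖x‖ := norm_pos_iff.2 hxne
  have key : ∀ i : Fin n, iteratedFDeriv ℝ 2
      (fun x : EuclideanSpace ℝ (Fin n) => ‖x‖ ^ γ * v (x1 x / ‖x‖)) x
      ![EuclideanSpace.single i 1, EuclideanSpace.single i 1] =
        ‖x‖ ^ γ * ((γ / ‖x‖ ^ 2 + γ * (γ - 2) * (x i) ^ 2 / ‖x‖ ^ 4) * v (x1 x / ‖x‖)
          + (2 * γ * (x i) / ‖x‖ ^ 2 * ((if i = ⟨0, hn0⟩ then 1 else 0) / ‖x‖ - x1 x * (x i) / ‖x‖ ^ 3)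
             + (- 2 * (if i = ⟨0, hn0⟩ then 1 else 0) * (x i) / ‖x‖ ^ 3 - x1 x / ‖x‖ ^ 3
              + 3 * x1 x * (x i) ^ 2 / ‖x‖ ^ 5)) * v1 (x1 x / ‖x‖)
          + ((if i = ⟨0, hn0⟩ then 1 else 0) / ‖x‖ - x1 x * (x i) / ‖x‖ ^ 3) ^ 2 * v2 (x1 x / ‖x‖)) := by
    intro i
    set e : EuclideanSpace ℝ (Fin n) := EuclideanSpace.single i 1 with he
    set δ : ℝ := if i = ⟨0, hn0⟩ then 1 else 0 with hδ
    have hl : ∀ s : ℝ, HasDerivAt (fun s : ℝ => x + s • e) e s := fun s => by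
      simpa using ((hasDerivAt_id s).smul_const e).const_add x
    have hx0 : x + (0:ℝ) • e = x := by simp
    have hρ : ∀ᶠ s in 𝓝 (0:ℝ), 0 < ‖x + s • e‖ ∧
        HasDerivAt (fun s : ℝ => ‖x + s • e‖) ((x i + s) / ‖x + s • e‖) s := by
      have hc : ContinuousAt (fun s : ℝ => x + s • e) 0 := (hl 0).continuousAt
      have : ∀ᶠ s in 𝓝 (0:ℝ), x + s • e ≠ 0 := by
        refine hc.eventually_ne ?_
        rwa [hx0]
      filter_upwards [this] with s hs
      have hpos : 0 < ‖x + s • e‖ := norm_pos_iff.2 hs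
      refine ⟨hpos, ?_⟩
      have h1 := (hl s).norm_sq
      have h2 := h1.sqrt (pow_pos hpos 2).ne'
      simp only [sqrt_sq (norm_nonneg _)] at h2
      refine h2.congr_deriv ?_
      have : inner ℝ (x + s • e) e = x i + s := by
        rw [he, EuclideanSpace.inner_single_right]
        simp
      rw [this]
      field_simp
    have hxs : ∀ s : ℝ, x1 (x + s • e) = x1 x + δ * s := by
      intro s
      simp only [x1, dif_pos hn0, he, hδ]
      by_cases h : i = ⟨0, hn0⟩
      · simp [h]
      · have : (⟨0, hn0⟩ : Fin n) ≠ i := fun h' => h h'.symm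
        simp [h, this]
    obtain ⟨φ1, hφ1, hφ2⟩ := line_deriv (γ := γ) (a := x i) (ξ := x1 x) (δ := δ)
      (ρ := fun s : ℝ => ‖x + s • e‖) hρ hv hv1 (by simpa using hx)
    have := second_line (e := e) hu (φ1 := φ1) (by simpa only [hxs] using hφ1) hφ2
    rw [this]
    simp only [hx0]
  unfold lap
  rw [Finset.sum_congr rfl fun i _ => key i]
  have hS1 : ∑ i, (x i) ^ 2 = ‖x‖ ^ 2 := (EuclideanSpace.real_norm_sq_eq x).symm
  have hS2 : ∑ i : Fin n, (if i = ⟨0, hn0⟩ then (1:ℝ) else 0) = 1 := by simp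
  have hS3 : ∑ i : Fin n, (if i = ⟨0, hn0⟩ then (1:ℝ) else 0) * x i = x1 x := by
    simp [x1, hn0]
  have hδ2 : ∀ i : Fin n, (if i = ⟨0, hn0⟩ then (1:ℝ) else 0) ^ 2 = if i = ⟨0, hn0⟩ then 1 else 0 := by
    intro i; split_ifs <;> norm_num
  set D := ‖x‖ ^ γ
  set R := ‖x‖
  set ξ := x1 x
  generalize v (ξ / R) = A
  generalize v1 (ξ / R) = B
  generalize v2 (ξ / R) = C
  have hterm : ∀ i : Fin n, D * ((γ / R ^ 2 + γ * (γ - 2) * (x i) ^ 2 / R ^ 4) * A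
          + (2 * γ * (x i) / R ^ 2 * ((if i = ⟨0, hn0⟩ then 1 else 0) / R - ξ * (x i) / R ^ 3)
             + (- 2 * (if i = ⟨0, hn0⟩ then 1 else 0) * (x i) / R ^ 3 - ξ / R ^ 3
              + 3 * ξ * (x i) ^ 2 / R ^ 5)) * B
          + ((if i = ⟨0, hn0⟩ then 1 else 0) / R - ξ * (x i) / R ^ 3) ^ 2 * C) =
      D * (γ / R ^ 2 * A - ξ / R ^ 3 * B) +
      D * (γ * (γ - 2) / R ^ 4 * A - 2 * γ * ξ / R ^ 5 * B + 3 * ξ / R ^ 5 * B + ξ ^ 2 / R ^ 6 * C)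
        * (x i) ^ 2 +
      D * (2 * γ / R ^ 3 * B - 2 / R ^ 3 * B - 2 * ξ / R ^ 4 * C)
        * ((if i = ⟨0, hn0⟩ then 1 else 0) * x i) +
      D * (C / R ^ 2) * (if i = ⟨0, hn0⟩ then 1 else 0) := by
    intro i
    have := hδ2 i
    generalize (if i = ⟨0, hn0⟩ then (1:ℝ) else 0) = δ at this
    have hR : R ≠ 0 := hρ0.ne'
    field_simp
    linear_combination (D * C * R ^ 4) * this
  rw [Finset.sum_congr rfl fun i _ => hterm i]
  rw [Finset.sum_add_distrib, Finset.sum_add_distrib, Finset.sum_add_distrib, ← Finset.mul_sum,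
    ← Finset.mul_sum, ← Finset.mul_sum, ← Finset.mul_sum, hS1, hS2, hS3]
  simp only [Finset.sum_const, Finset.card_univ, Fintype.card_fin, nsmul_eq_mul, Lam]
  have hR : R ≠ 0 := hρ0.ne'
  field_simp
  ring

lemma x1_le_norm {n : ℕ} (x : EuclideanSpace ℝ (Fin n)) : x1 x ≤ ‖x‖ := by
  unfold x1
  split_ifs with h
  · exact (le_abs_self _).trans (by simpa using PiLp.norm_apply_le x ⟨0, h⟩)
  · exact norm_nonneg x

lemma x1_contDiff {n : ℕ} (hn : 0 < n) :
    ContDiff ℝ 2 (x1 : EuclideanSpace ℝ (Fin n) → ℝ) := by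
  have : (x1 : EuclideanSpace ℝ (Fin n) → ℝ) = fun x => x ⟨0, hn⟩ := by
    funext x; simp [x1, hn]
  rw [this]
  fun_prop

lemma u_contDiffOn {n : ℕ} (hn : 2 ≤ n) {γ α : ℝ} {W : ℝ → ℝ} (hW : ContDiffOn ℝ 2 W (Ico 0 1)) :
    ContDiffOn ℝ 2 (fun x : EuclideanSpace ℝ (Fin n) =>
      ‖x‖ ^ γ * ((x1 x / ‖x‖) ^ α * W (1 - (x1 x / ‖x‖) ^ 2))) (halfSpace n) := by
  have hpos : ∀ x ∈ halfSpace n, 0 < ‖x‖ := fun x hx => lt_of_lt_of_le hx (x1_le_norm x)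
  have h1 : ContDiffOn ℝ 2 (fun x : EuclideanSpace ℝ (Fin n) => ‖x‖) (halfSpace n) := fun x hx =>
    (contDiffAt_norm ℝ (norm_pos_iff.1 (hpos x hx))).contDiffWithinAt
  have h2 : ContDiffOn ℝ 2 (fun x : EuclideanSpace ℝ (Fin n) => x1 x / ‖x‖) (halfSpace n) :=
    (x1_contDiff (by omega)).contDiffOn.div h1 fun x hx => (hpos x hx).ne'
  refine (h1.rpow_const_of_ne fun x hx => (hpos x hx).ne').mul
    ((h2.rpow_const_of_ne fun x hx => (div_pos hx (hpos x hx)).ne').mul ?_)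
  refine hW.comp (contDiffOn_const.sub (h2.pow 2)) ?_
  intro x hx
  have ha : 0 < x1 x / ‖x‖ := div_pos hx (hpos x hx)
  have hb : x1 x / ‖x‖ ≤ 1 := (div_le_one (hpos x hx)).2 (x1_le_norm x)
  constructor <;> nlinarith

lemma halfSpace_isOpen {n : ℕ} (hn : 2 ≤ n) : IsOpen (halfSpace n) :=
  isOpen_lt continuous_const (x1_contDiff (by omega)).continuous

lemma lap_continuousOn {n : ℕ} (hn : 2 ≤ n) {u : EuclideanSpace ℝ (Fin n) → ℝ}
    (hu : ContDiffOn ℝ 2 u (halfSpace n)) : ContinuousOn (lap u) (halfSpace n) := by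
  intro x hx
  have hux := hu.contDiffAt ((halfSpace_isOpen hn).mem_nhds hx)
  have h := (hux.iteratedFDeriv_right (m := 0) (i := 2) (by norm_num)).continuousAt
  refine ContinuousAt.continuousWithinAt ?_
  unfold lap
  refine tendsto_finsetSum _ fun i _ => ?_
  exact ((ContinuousMultilinearMap.apply ℝ (fun _ : Fin 2 => EuclideanSpace ℝ (Fin n)) ℝ
    ![EuclideanSpace.single i 1, EuclideanSpace.single i 1]).continuous.continuousAt).comp h

/-- for `1 < p < p_KO` there is a separable solution
`u(x) = |x|^{−2/(p−1)} v(x₁/|x|)` of `−Δu − (μ/x₁²)u + u^p = 0` whose angular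
profile satisfies `c₁ t^{α₋} < v(t) < c₂ t^{α₋}` on `(0,1]`. -/
theorem stmt17 (n : ℕ) (hn : 2 ≤ n) (μ p : ℝ) (hμ : μ < 1 / 4) (hp1 : 1 < p)
    (hKO : μ < 0 → p < 1 - 2 / aMinus μ) :
    ∃ c₁ c₂ : ℝ, 0 < c₁ ∧ c₁ < c₂ ∧ ∃ v : ℝ → ℝ,
      (∀ t ∈ Set.Ioc (0 : ℝ) 1, 0 < v t) ∧
      ContDiffOn ℝ 2 v (Set.Ioo 0 1) ∧
      (∀ t ∈ Set.Ioo (0 : ℝ) 1,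
        (1 - t ^ 2) * deriv (deriv v) t - ((n : ℝ) - 1) * t * deriv v t
          + (μ / t ^ 2) * v t + Lam n (-(2 / (p - 1))) * v t = v t ^ p) ∧
      (∀ t ∈ Set.Ioc (0 : ℝ) 1, c₁ * t ^ aMinus μ < v t ∧ v t < c₂ * t ^ aMinus μ) ∧
      (∀ x ∈ halfSpace n, 0 < ‖x‖ ^ (-(2 / (p - 1))) * v (x1 x / ‖x‖)) ∧
      ContDiffOn ℝ 2
        (fun x : EuclideanSpace ℝ (Fin n) => ‖x‖ ^ (-(2 / (p - 1))) * v (x1 x / ‖x‖))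
        (halfSpace n) ∧
      (∀ x ∈ halfSpace n,
        lap (fun x : EuclideanSpace ℝ (Fin n) => ‖x‖ ^ (-(2 / (p - 1))) * v (x1 x / ‖x‖)) x
          + (μ / (x1 x) ^ 2) * (‖x‖ ^ (-(2 / (p - 1))) * v (x1 x / ‖x‖))
          = (‖x‖ ^ (-(2 / (p - 1))) * v (x1 x / ‖x‖)) ^ p) := by
  have hn0 : 0 < n := by omega
  have hn2 : (2:ℝ) ≤ n := by exact_mod_cast hn
  set α := aMinus μ with hα_def
  have hs : 0 < sqrt (1 / 4 - μ) := sqrt_pos.2 (by linarith)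
  have hαlt : α < 1 / 2 := by rw [hα_def]; unfold aMinus; linarith
  have hαμ : α ^ 2 - α + μ = 0 := by
    have := sq_sqrt (show (0:ℝ) ≤ 1 / 4 - μ by linarith)
    rw [hα_def]; unfold aMinus
    linear_combination this
  have hp0 : 0 < p - 1 := by linarith
  have hβ : -2 < (p - 1) * α := by
    rcases lt_or_ge μ 0 with h | h
    · have hα0 : α < 0 := by nlinarith
      have := hKO h
      have h2 : p - 1 < -2 / α := by rw [neg_div]; linarith
      rwa [lt_div_iff_of_neg hα0] at h2
    · have hα0 : 0 ≤ α := by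
        have : sqrt (1 / 4 - μ) ≤ 1 / 2 := sqrt_le_iff.2 ⟨by norm_num, by linarith⟩
        rw [hα_def]; unfold aMinus; linarith
      nlinarith [mul_nonneg hp0.le hα0]
  set γ := -(2 / (p - 1)) with hγ
  obtain ⟨W, P, hWc, hPc, hP0, hWd, hPd, hWp⟩ := exists_W (b := ((n:ℝ) - 1) / 2) (α := α)
    (κ := Lam n γ - α * (α + n - 2)) (by linarith) hαlt hβ hp1 rfl
  have hWreg := W_reg (b := ((n:ℝ) - 1) / 2) (by linarith) hWc hPc hP0 hWd hPd hWp
  obtain ⟨w1, w2, hw1, hw2, hode⟩ := W_ode hWd hPd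
  obtain ⟨v1, v2, hv1, hv2, hv⟩ := v_ode hαμ rfl hw1 hw2 hode hWp
  obtain ⟨ra, hra, hmin⟩ := isCompact_Icc.exists_isMinOn (nonempty_Icc.2 (zero_le_one (α := ℝ)))
    hWc.continuousOn
  obtain ⟨rb, hrb, hmax⟩ := isCompact_Icc.exists_isMaxOn (nonempty_Icc.2 (zero_le_one (α := ℝ)))
    hWc.continuousOn
  have hy : ∀ t ∈ Ioc (0:ℝ) 1, 1 - t ^ 2 ∈ Icc (0:ℝ) 1 := fun t ht => by
    constructor <;> nlinarith [ht.1, ht.2]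
  have hvpos : ∀ t ∈ Ioc (0:ℝ) 1, 0 < t ^ α * W (1 - t ^ 2) := fun t ht =>
    mul_pos (rpow_pos_of_pos ht.1 _) (hWp _ (hy t ht))
  have hpos : ∀ x ∈ halfSpace n, 0 < ‖x‖ := fun x hx => lt_of_lt_of_le hx (x1_le_norm x)
  have htm : ∀ x ∈ halfSpace n, x1 x / ‖x‖ ∈ Ioc (0:ℝ) 1 := fun x hx =>
    ⟨div_pos hx (hpos x hx), (div_le_one (hpos x hx)).2 (x1_le_norm x)⟩
  have hu := u_contDiffOn (n := n) hn (γ := γ) (α := α) hWreg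
  have hup : ∀ x ∈ halfSpace n, 0 < ‖x‖ ^ γ * ((x1 x / ‖x‖) ^ α * W (1 - (x1 x / ‖x‖) ^ 2)) :=
    fun x hx => mul_pos (rpow_pos_of_pos (hpos x hx) _) (hvpos _ (htm x hx))
  have hab : W ra ≤ W rb := hmin hrb
  have hWra := hWp ra hra
  refine ⟨W ra / 2, W rb + 1, by linarith, by linarith, fun t => t ^ α * W (1 - t ^ 2),
    hvpos, ?_, ?_, ?_, hup, hu, ?_⟩
  · intro t ht
    have h1 : ContDiffAt ℝ 2 (fun t : ℝ => t ^ α) t :=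
      contDiffAt_id.rpow_const_of_ne ht.1.ne'
    have hm : 1 - t ^ 2 ∈ Ioo (0:ℝ) 1 := ⟨by nlinarith [ht.1, ht.2], by nlinarith [ht.1, ht.2]⟩
    have h2 : ContDiffAt ℝ 2 W (1 - t ^ 2) := hWreg.contDiffAt (Ico_mem_nhds hm.1 hm.2)
    have h3 : ContDiffAt ℝ 2 (fun t : ℝ => W (1 - t ^ 2)) t :=
      ContDiffAt.comp t h2 (by fun_prop : ContDiffAt ℝ 2 (fun t : ℝ => 1 - t ^ 2) t)
    exact (h1.mul h3).contDiffWithinAt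
  · intro t ht
    have d1 : deriv (fun t : ℝ => t ^ α * W (1 - t ^ 2)) t = v1 t := (hv1 t ht).deriv
    have d2 : deriv (deriv (fun t : ℝ => t ^ α * W (1 - t ^ 2))) t = v2 t := by
      refine HasDerivAt.deriv ((hv2 t ht).congr_of_eventuallyEq ?_)
      filter_upwards [Ioo_mem_nhds ht.1 ht.2] with s hs using (hv1 s hs).deriv
    rw [d1, d2]
    exact hv t ht
  · intro t ht
    have hT : 0 < t ^ α := rpow_pos_of_pos ht.1 _
    have a1 : W ra ≤ W (1 - t ^ 2) := hmin (hy t ht)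
    have a2 : W (1 - t ^ 2) ≤ W rb := hmax (hy t ht)
    constructor
    · change W ra / 2 * t ^ α < t ^ α * W (1 - t ^ 2)
      rw [mul_comm]
      exact mul_lt_mul_of_pos_left (by linarith) hT
    · change t ^ α * W (1 - t ^ 2) < (W rb + 1) * t ^ α
      rw [mul_comm (W rb + 1)]
      exact mul_lt_mul_of_pos_left (by linarith) hT
  · set u : EuclideanSpace ℝ (Fin n) → ℝ := fun x =>
      ‖x‖ ^ γ * ((x1 x / ‖x‖) ^ α * W (1 - (x1 x / ‖x‖) ^ 2)) with hu_def
    change ∀ x ∈ halfSpace n, lap u x + (μ / (x1 x) ^ 2) * u x = u x ^ p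
    have hopen := halfSpace_isOpen hn
    have h1n : 1 < n := by omega
    have hoff : ∀ x ∈ halfSpace n, x ⟨1, h1n⟩ ≠ 0 →
        lap u x + (μ / (x1 x) ^ 2) * u x = u x ^ p := by
      intro x hx hx1
      have hR := hpos x hx
      have hlt : x1 x < ‖x‖ := by
        refine lt_of_pow_lt_pow_left₀ 2 hR.le ?_
        rw [EuclideanSpace.real_norm_sq_eq]
        have : ∑ i ∈ ({⟨0, hn0⟩, ⟨1, h1n⟩} : Finset (Fin n)), (x i) ^ 2 ≤ ∑ i, (x i) ^ 2 :=
          Finset.sum_le_sum_of_subset_of_nonneg (Finset.subset_univ _) fun _ _ _ => sq_nonneg _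
        rw [Finset.sum_pair (by simp)] at this
        have h3 : 0 < (x ⟨1, h1n⟩) ^ 2 := by positivity
        have h4 : x1 x = x ⟨0, hn0⟩ := by simp [x1, hn0]
        rw [h4]
        linarith
      have ht : x1 x / ‖x‖ ∈ Ioo (0:ℝ) 1 := ⟨div_pos hx hR, (div_lt_one hR).2 hlt⟩
      have hl := lap_formula hn (γ := γ) hv1 hv2 ht (hu.contDiffAt (hopen.mem_nhds hx))
      have hl' : lap u x = _ := hl
      rw [hl']
      have hv' := hv _ ht
      have hup' : u x ^ p = ‖x‖ ^ γ / ‖x‖ ^ 2 *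
          ((x1 x / ‖x‖) ^ α * W (1 - (x1 x / ‖x‖) ^ 2)) ^ p := by
        rw [hu_def]
        change (‖x‖ ^ γ * ((x1 x / ‖x‖) ^ α * W (1 - (x1 x / ‖x‖) ^ 2))) ^ p = _
        rw [mul_rpow (rpow_nonneg hR.le _) (hvpos _ (htm x hx)).le, ← rpow_mul hR.le]
        congr 1
        rw [← rpow_natCast, ← rpow_sub hR]
        congr 1
        rw [hγ]
        push_cast
        field_simp
        ring
      rw [hup', ← hv']
      have hx0 : x1 x ≠ 0 := ne_of_gt hx
      simp only [hu_def]
      generalize (x1 x / ‖x‖) ^ α * W (1 - (x1 x / ‖x‖) ^ 2) = A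
      generalize v1 (x1 x / ‖x‖) = B
      generalize v2 (x1 x / ‖x‖) = C
      generalize ‖x‖ ^ γ = D
      field_simp
      ring
    intro x hx
    by_cases hx1 : x ⟨1, h1n⟩ = 0
    · have hE : ContinuousAt (fun y => lap u y + (μ / (x1 y) ^ 2) * u y - u y ^ p) x := by
        have hm := hopen.mem_nhds hx
        have c1 : ContinuousAt (lap u) x := (lap_continuousOn hn hu).continuousAt hm
        have c2 : ContinuousAt u x := hu.continuousOn.continuousAt hm
        have c3 : ContinuousAt (x1 : EuclideanSpace ℝ (Fin n) → ℝ) x :=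
          (x1_contDiff hn0).continuous.continuousAt
        have hx0 : x1 x ^ 2 ≠ 0 := pow_ne_zero 2 (ne_of_gt hx)
        exact (c1.add ((continuousAt_const.div (c3.pow 2) hx0).mul c2)).sub
          (c2.rpow_const (Or.inl (hup x hx).ne'))
      set e : EuclideanSpace ℝ (Fin n) := EuclideanSpace.single ⟨1, h1n⟩ 1 with he
      have hl : Tendsto (fun s : ℝ => x + s • e) (𝓝[≠] 0) (𝓝 x) := by
        have : Continuous fun s : ℝ => x + s • e := by fun_prop
        have := this.tendsto 0
        simp only [zero_smul, add_zero] at this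
        exact this.mono_left nhdsWithin_le_nhds
      have ht := hE.tendsto.comp hl
      have hz : ∀ᶠ s in 𝓝[≠] (0:ℝ), ((fun y => lap u y + (μ / (x1 y) ^ 2) * u y - u y ^ p) ∘
          fun s : ℝ => x + s • e) s = 0 := by
        filter_upwards [hl.eventually (hopen.mem_nhds hx), self_mem_nhdsWithin] with s hs hs0
        have : (x + s • e) ⟨1, h1n⟩ ≠ 0 := by
          simpa [he, hx1] using hs0
        simpa only [Function.comp] using sub_eq_zero.2 (hoff _ hs this)
      have := tendsto_nhds_unique (ht.congr' hz) tendsto_const_nhds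
      exact sub_eq_zero.1 this
    · exact hoff x hx hx1
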